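/- Let 1 < p < ∞, -1 < α < ∞, and let K ≥ 0 be an integer. Suppose f ∈ A^p_α is such that D_θ^K f satisfies the Zygmund-type condition ‖(D_θ^K f)(e^{it}·) + (D_θ^K f)(e^{-it}·) - 2(D_θ^K f)(·)‖_{p,α} ≤ M|t| for all real t. Define h(t) = (cos t - cos 2t)/2, H_0(t) = h(t)/t², H_k(t) = ∫_t^∞ H_{k-1}(x) dx for k ≥ 1, C_k = (4/π) ∫_0^∞ |H_k(t)| dt, and B̃_K = 2^K (C_{K+2}/π + π C_K). Then for every n ≥ 1, E_n^{p,α}(f) ≤ B̃_K · M · n^{-K-1}. -/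

import Mathlib

/-!
The proof works with Taylor coefficients `f = ∑ a_j z^j` and coefficient multipliers.  A multiplier
of the form `j ↦ ∫ k(t) e_j(t) dν(t)`, where each `e_j(t)` is a combination of rotation characters
`e^{± i c j t}`, is an average of rotations, and rotations are isometries of `A^p_α`; Minkowski's
integral inequality bounds its norm (`conv_bound`).  Two such families carry the argument.

* With `k = H_r` and `e_j(t) = e^{ixt} + (-1)^r e^{-ixt}`, the multiplier `Ak r x` satisfies
  `(i x)^r Ak r x = -(π/2) (1 - τ(x))`, where `τ` is the trapezoid that is `1` on `[-1,1]` and `0`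
  off `[-2,2]` (`Ak_mul`).  Taken at `x = j/m`, it integrates `r` times in `θ` the part of the
  series with coefficients weighted by `1 - τ(j/m)`, at the cost of a factor `C_r m^{-r}`
  (`exists_highpass`).
* With `e_j(u) = e^{iju} + e^{-iju} - 2` and `k(u) = -(δ-u)/δ²` on `(0,δ]`, the multiplier
  `s_j = smul2 δ j` maps `g = D_θ^K f` to an average of second differences, so its image has norm
  at most `Mδ/6` (`smul2_bound`), while `δ² j² (1 - s_j)` is minus the multiplier of the second
  difference of step `δ` (`smul2_spec`), which has norm at most `Mδ` on `g`.

With `m = n/2` and `δ = 4π/n`, the decomposition `a_j = a_j s_j + a_j (1 - s_j)` holds, and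
`τ(j/m) = 0` for `j ≥ n`.  Applying the first family with `r = K` to the first summand and with
`r = K + 2` to the second produces a function that agrees with `f` up to a polynomial of degree
less than `n` and whose norm is at most
`C_K m^{-K} Mδ/6 + C_{K+2} m^{-K-2} M/δ ≤ B̃_K M n^{-K-1}`.  For `K = 0` the first summand is
left untouched, which is enough because `C_0 ≥ 1` (`one_le_Cc_zero`).

The facts about `H_k` that are needed (integrability, `H_{k+1}' = -H_k`, decay at infinity) follow
from the Laplace representation `1/t² = ∫_0^∞ s e^{-st} ds`, which yields `|H_k(t)| ≤ 1/t²` for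
every `k` (`Hf_bound`).
-/


open MeasureTheory Complex Set Metric

noncomputable section

/-- The open unit disc in `ℂ`. -/
def unitDisc : Set ℂ := Metric.ball 0 1

/-- The density of the weighted measure `dA_α = (α+1) π⁻¹ (1-|z|²)^α dA`
with respect to area measure. -/
def wt (α : ℝ) (z : ℂ) : ℝ := (α + 1) / Real.pi * (1 - ‖z‖ ^ 2) ^ α

/-- The norm `‖f‖_{p,α}` of the weighted Bergman space `A^p_α`. -/
def bNorm (p α : ℝ) (f : ℂ → ℂ) : ℝ :=
  (∫ z in unitDisc, ‖f z‖ ^ p * wt α z) ^ (1 / p)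

/-- Membership in the weighted Bergman space `A^p_α`: analytic on the unit disc
with finite weighted `p`-norm. -/
def MemAp (p α : ℝ) (f : ℂ → ℂ) : Prop :=
  DifferentiableOn ℂ f unitDisc ∧
    IntegrableOn (fun z => ‖f z‖ ^ p * wt α z) unitDisc

/-- `E_n^{p,α}(f)`: the distance from `f` to the polynomials of degree at most `n`
in the `A^p_α` norm. -/
def polyErr (p α : ℝ) (n : ℕ) (f : ℂ → ℂ) : ℝ :=
  sInf {e | ∃ P : Polynomial ℂ, P.natDegree ≤ n ∧
    e = bNorm p α fun z => f z - P.eval z}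

/-- The functions `H_k`: `H_0(t) = h(t)/t²` with `h(t) = (cos t - cos 2t)/2`, and
`H_k(t) = ∫_t^∞ H_{k-1}(x) dx`. -/
def Hf : ℕ → ℝ → ℝ
  | 0, t => ((Real.cos t - Real.cos (2*t)) / 2) / t ^ 2
  | (k+1), t => ∫ x in Set.Ioi t, Hf k x

/-- The constants `C_k = (4/π) ∫_0^∞ |H_k(t)| dt`. -/
def Cc (k : ℕ) : ℝ := 4 / Real.pi * ∫ t in Set.Ioi (0:ℝ), |Hf k t|

/-- The angular derivative `D_θ f (z) = i z f'(z)`. -/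
def Dth (f : ℂ → ℂ) : ℂ → ℂ := fun z => Complex.I * z * deriv f z

/-- The constant `B̃_K = 2^K (C_{K+2}/π + π C_K)`. -/
def Btil (K : ℕ) : ℝ := 2 ^ K * (Cc (K + 2) / Real.pi + Real.pi * Cc K)


open Filter Topology

/-! ### The functions `H_k` -/

/-- The Laplace representation of the `k`-fold tail integral of `t ↦ e^{iat} / t²`. -/
def lapG (a : ℝ) (k : ℕ) (t : ℝ) : ℂ :=
  ∫ s in Ioi (0:ℝ), (s : ℂ) * Complex.exp ((a * I - s) * t) / (s - a * I) ^ k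

lemma integral_id_mul_exp {t : ℝ} (ht : 0 < t) :
    ∫ s in Ioi (0:ℝ), s * Real.exp (-s * t) = 1 / t ^ 2 := by
  have h := Real.integral_rpow_mul_exp_neg_mul_Ioi (a := 2) (r := t) (by norm_num) ht
  have h2 : Real.Gamma 2 = 1 := by
    simp
  rw [h2, mul_one] at h
  rw [← Real.rpow_natCast, ← inv_eq_one_div, ← Real.inv_rpow ht.le]
  rw [inv_eq_one_div]
  push_cast
  rw [← h]
  refine setIntegral_congr_fun measurableSet_Ioi fun s hs => ?_
  have h3 : (2:ℝ) - 1 = 1 := by norm_num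
  simp only [h3, Real.rpow_one]
  ring_nf

/-- The integral was computed to be nonzero, whereas a non-integrable function has junk integral `0`. -/
lemma integrable_id_mul_exp {t : ℝ} (ht : 0 < t) :
    IntegrableOn (fun s : ℝ => s * Real.exp (-s * t)) (Ioi 0) := by
  by_contra h
  have h1 := integral_id_mul_exp ht
  rw [integral_undef h] at h1
  have : 0 < 1 / t ^ 2 := by positivity
  linarith

lemma norm_sub_mul_I_ge {a s : ℝ} (ha : 1 ≤ a) : 1 ≤ ‖(s : ℂ) - a * I‖ := by
  have := Complex.abs_im_le_norm ((s : ℂ) - a * I)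
  simp at this
  exact (ha.trans (le_abs_self a)).trans this

lemma lap_norm_le {a s t : ℝ} (ha : 1 ≤ a) (hs : 0 < s) (k : ℕ) :
    ‖(s : ℂ) * Complex.exp ((a * I - s) * t) / (s - a * I) ^ k‖ ≤ s * Real.exp (-s * t) := by
  rw [norm_div, norm_mul, Complex.norm_exp, norm_pow]
  have h1 : ((a * I - s) * t : ℂ).re = -s * t := by simp
  rw [h1, Complex.norm_real, Real.norm_of_nonneg hs.le]
  exact div_le_self (by positivity) (one_le_pow₀ (norm_sub_mul_I_ge ha))

lemma lap_meas (a : ℝ) (k : ℕ) :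
    Measurable fun q : ℝ × ℝ =>
      (q.2 : ℂ) * Complex.exp ((a * I - q.2) * q.1) / (q.2 - a * I) ^ k := by
  fun_prop

lemma lapG_integrand {a t : ℝ} (ha : 1 ≤ a) (ht : 0 < t) (k : ℕ) :
    IntegrableOn (fun s : ℝ => (s : ℂ) * Complex.exp ((a * I - s) * t) / (s - a * I) ^ k)
      (Ioi 0) := by
  refine (integrable_id_mul_exp ht).mono'
    ((lap_meas a k).comp (measurable_const.prodMk measurable_id)).aestronglyMeasurable ?_
  filter_upwards [ae_restrict_mem measurableSet_Ioi] with s hs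
  exact lap_norm_le ha hs k

lemma lapG_bound {a t : ℝ} (ha : 1 ≤ a) (ht : 0 < t) (k : ℕ) : ‖lapG a k t‖ ≤ 1 / t ^ 2 := by
  rw [← integral_id_mul_exp ht]
  refine norm_integral_le_of_norm_le (integrable_id_mul_exp ht) ?_
  filter_upwards [ae_restrict_mem measurableSet_Ioi] with s hs
  exact lap_norm_le ha hs k

lemma lap_prod_integrable {a t : ℝ} (ha : 1 ≤ a) (ht : 0 < t) (k : ℕ) :
    Integrable (fun q : ℝ × ℝ =>
      (q.2 : ℂ) * Complex.exp ((a * I - q.2) * q.1) / (q.2 - a * I) ^ k)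
      ((volume.restrict (Ioi t)).prod (volume.restrict (Ioi 0))) := by
  rw [integrable_prod_iff (lap_meas a k).aestronglyMeasurable]
  constructor
  · filter_upwards [ae_restrict_mem measurableSet_Ioi] with x hx
    exact lapG_integrand ha (ht.trans hx) k
  · have hint : IntegrableOn (fun x : ℝ => 1 / x ^ 2) (Ioi t) := by
      have := integrableOn_Ioi_rpow_of_lt (a := -2) (by norm_num) ht
      refine this.congr_fun (fun x hx => ?_) measurableSet_Ioi
      have hx' : 0 < x := ht.trans hx
      simp only
      rw [Real.rpow_neg hx'.le, one_div]
      norm_num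
    refine hint.mono' ?_ ?_
    · exact (lap_meas a k).norm.aestronglyMeasurable.integral_prod_right'
    · filter_upwards [ae_restrict_mem measurableSet_Ioi] with x hx
      have hx' : 0 < x := ht.trans hx
      rw [Real.norm_of_nonneg (integral_nonneg fun _ => norm_nonneg _), ← integral_id_mul_exp hx']
      refine integral_mono_ae (lapG_integrand ha hx' k).norm (integrable_id_mul_exp hx') ?_
      filter_upwards [ae_restrict_mem measurableSet_Ioi] with s hs
      exact lap_norm_le ha hs k

lemma lapG_integrableOn {a t : ℝ} (ha : 1 ≤ a) (ht : 0 < t) (k : ℕ) :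
    IntegrableOn (lapG a k) (Ioi t) :=
  (lap_prod_integrable ha ht k).integral_prod_left

/-- Passing to the tail integral adds one factor `(s - ia)⁻¹` to the Laplace density. -/
lemma lapG_tail {a t : ℝ} (ha : 1 ≤ a) (ht : 0 < t) (k : ℕ) :
    ∫ x in Ioi t, lapG a k x = lapG a (k + 1) t := by
  unfold lapG
  rw [integral_integral_swap (lap_prod_integrable ha ht k)]
  refine setIntegral_congr_fun measurableSet_Ioi fun s hs => ?_
  have hs' : 0 < s := hs
  have hne : ((s : ℂ) - a * I) ≠ 0 := by
    rw [← norm_pos_iff]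
    exact lt_of_lt_of_le one_pos (norm_sub_mul_I_ge ha)
  have hre : ((a * I - s : ℂ)).re < 0 := by simp [hs']
  have := integral_exp_mul_complex_Ioi hre t
  calc ∫ x in Ioi t, (s : ℂ) * Complex.exp ((a * I - s) * x) / (s - a * I) ^ k
      = ∫ x in Ioi t, ((s : ℂ) / (s - a * I) ^ k) * Complex.exp ((a * I - s) * x) := by
        congr 1; ext x; ring
    _ = ((s : ℂ) / (s - a * I) ^ k) * (-Complex.exp ((a * I - s) * t) / (a * I - s)) := by
        rw [integral_const_mul, this]
    _ = _ := by
        have h2 : (a * I - s : ℂ) = -(s - a * I) := by ring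
        rw [h2]
        field_simp
        ring

lemma lapG_zero {a t : ℝ} (ht : 0 < t) :
    lapG a 0 t = Complex.exp (a * t * I) / t ^ 2 := by
  unfold lapG
  have : ∀ s : ℝ, (s : ℂ) * Complex.exp ((a * I - s) * t) / (s - a * I) ^ 0
      = Complex.exp (a * t * I) * ((s * Real.exp (-s * t) : ℝ) : ℂ) := by
    intro s
    push_cast
    rw [pow_zero, div_one, mul_left_comm, ← Complex.exp_add]
    ring_nf
  simp_rw [this]
  rw [integral_const_mul, integral_complex_ofReal, integral_id_mul_exp ht]
  push_cast; ring

lemma Hf_eq_lapG (k : ℕ) : ∀ t : ℝ, 0 < t → Hf k t = ((lapG 1 k t - lapG 2 k t) / 2).re := by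
  induction k with
  | zero =>
    intro t ht
    rw [lapG_zero ht, lapG_zero ht, Hf]
    rw [← sub_div, div_right_comm _ ((t:ℂ)^2)]
    have : ((t:ℂ) ^ 2) = ((t ^ 2 : ℝ) : ℂ) := by push_cast; rfl
    rw [this, Complex.div_ofReal_re]
    have e1 : ((1:ℝ):ℂ) * t * I = (t:ℝ) * I := by push_cast; ring
    have e2 : ((2:ℝ):ℂ) * t * I = ((2 * t : ℝ):ℂ) * I := by push_cast; ring
    rw [e1, e2]
    have h2 : ∀ w : ℂ, (w / 2).re = w.re / 2 := fun w => by simp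
    rw [h2, Complex.sub_re, Complex.exp_ofReal_mul_I_re, Complex.exp_ofReal_mul_I_re]
  | succ k ih =>
    intro t ht
    rw [Hf]
    rw [setIntegral_congr_fun measurableSet_Ioi
      (fun x (hx : t < x) => ih x (ht.trans hx))]
    have i1 := lapG_integrableOn (a := 1) le_rfl ht k
    have i2 := lapG_integrableOn (a := 2) (by norm_num) ht k
    have := integral_re ((i1.sub i2).div_const 2)
    simp only [RCLike.re_to_complex, Pi.sub_apply] at this
    rw [this, integral_div, integral_sub i1 i2, lapG_tail le_rfl ht, lapG_tail (by norm_num) ht]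

/-- As `|s - ia| ≥ 1` for `a = 1, 2`, each Laplace integral is at most `∫ s e^{-st} ds = 1/t²`. -/
lemma Hf_bound (k : ℕ) {t : ℝ} (ht : 0 < t) : |Hf k t| ≤ 1 / t ^ 2 := by
  rw [Hf_eq_lapG k t ht]
  refine (Complex.abs_re_le_norm _).trans ?_
  rw [norm_div]
  have h1 := lapG_bound (a := 1) le_rfl ht k
  have h2 := lapG_bound (a := 2) (by norm_num) ht k
  have h3 := norm_sub_le (lapG 1 k t) (lapG 2 k t)
  have : ‖(2:ℂ)‖ = 2 := by simp
  rw [this]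
  linarith

lemma Hf_zero_bound {t : ℝ} : |Hf 0 t| ≤ 2 := by
  rcases eq_or_ne t 0 with rfl | ht
  · simp [Hf]
  have ht2 : 0 < t ^ 2 := by positivity
  rw [Hf, abs_div, abs_of_pos ht2, div_le_iff₀ ht2]
  have a1 := Real.one_sub_sq_div_two_le_cos (x := t)
  have a2 := Real.one_sub_sq_div_two_le_cos (x := 2 * t)
  have a3 := Real.cos_le_one t
  have a4 := Real.cos_le_one (2 * t)
  rw [abs_le]
  constructor <;> nlinarith

/-- Integrability of `H_k` from boundedness near `0` and the `1/t²` bound at infinity. -/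
lemma Hf_step_integrable {k : ℕ} (hm : AEStronglyMeasurable (Hf k) (volume.restrict (Ioi 0)))
    {B : ℝ} (hB : ∀ t, 0 < t → |Hf k t| ≤ B) : IntegrableOn (Hf k) (Ioi 0) := by
  have hu : Ioi (0:ℝ) = Ioc 0 1 ∪ Ioi 1 := by simp
  rw [hu]
  refine IntegrableOn.union ?_ ?_
  · have hc : IntegrableOn (fun _ : ℝ => B) (Ioc 0 1) := integrableOn_const (by simp)
    refine hc.mono' (hm.mono_set Ioc_subset_Ioi_self) ?_
    filter_upwards [ae_restrict_mem measurableSet_Ioc] with x hx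
    exact hB x hx.1
  · have hint : IntegrableOn (fun x : ℝ => 1 / x ^ 2) (Ioi 1) := by
      have := integrableOn_Ioi_rpow_of_lt (a := -2) (by norm_num) one_pos
      refine this.congr_fun (fun x hx => ?_) measurableSet_Ioi
      have hx' : (0:ℝ) < x := one_pos.trans hx
      simp only
      rw [Real.rpow_neg hx'.le, one_div]
      norm_num
    refine hint.mono' (hm.mono_set (Ioi_subset_Ioi zero_le_one)) ?_
    filter_upwards [ae_restrict_mem measurableSet_Ioi] with x hx
    exact Hf_bound k (one_pos.trans hx)

/-- `H_{k+1}` as a primitive of a globally integrable function, from which continuity and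
differentiability are read off. -/
lemma Hf_succ_eq {k : ℕ} (hi : IntegrableOn (Hf k) (Ioi 0)) {t : ℝ} (ht : 0 ≤ t) :
    Hf (k + 1) t = (∫ x in Ioi 0, Hf k x) - ∫ x in (0:ℝ)..t, (Ioi 0).indicator (Hf k) x := by
  have h1 : ∫ x in (0:ℝ)..t, (Ioi 0).indicator (Hf k) x = ∫ x in (0:ℝ)..t, Hf k x := by
    rw [intervalIntegral.integral_of_le ht, intervalIntegral.integral_of_le ht]
    exact setIntegral_congr_fun measurableSet_Ioc fun x hx =>
      indicator_of_mem (show x ∈ Ioi (0:ℝ) from hx.1) _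
  rw [h1, ← intervalIntegral.integral_interval_add_Ioi hi
    (hi.mono_set (Ioi_subset_Ioi ht)), Hf]
  ring

lemma Hf_succ_continuousOn {k : ℕ} (hi : IntegrableOn (Hf k) (Ioi 0)) :
    ContinuousOn (Hf (k + 1)) (Ici 0) := by
  have hI : Integrable ((Ioi (0:ℝ)).indicator (Hf k)) :=
    (integrable_indicator_iff measurableSet_Ioi).2 hi
  have hc := intervalIntegral.continuous_primitive (μ := volume)
    (fun a b => hI.intervalIntegrable (a := a) (b := b)) 0
  refine (continuous_const.sub hc).continuousOn.congr fun t ht => Hf_succ_eq hi ht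

lemma Hf_succ_bound {k : ℕ} (hi : IntegrableOn (Hf k) (Ioi 0)) {t : ℝ} (ht : 0 ≤ t) :
    |Hf (k + 1) t| ≤ ∫ x in Ioi 0, |Hf k x| := by
  rw [Hf]
  refine (norm_integral_le_integral_norm (Hf k)).trans ?_
  exact setIntegral_mono_set hi.norm (by filter_upwards with x using norm_nonneg _)
    (LE.le.eventuallyLE (Ioi_subset_Ioi ht))

lemma Hf_zero_continuousOn : ContinuousOn (Hf 0) (Ioi 0) := by
  have : Hf 0 = fun t => ((Real.cos t - Real.cos (2*t)) / 2) / t ^ 2 := by ext t; rfl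
  rw [this]
  refine ContinuousOn.div (by fun_prop) (by fun_prop) fun x hx => ?_
  have : (0:ℝ) < x := hx
  positivity

lemma Hf_integrable (k : ℕ) : IntegrableOn (Hf k) (Ioi 0) := by
  induction k with
  | zero =>
    exact Hf_step_integrable (Hf_zero_continuousOn.aestronglyMeasurable measurableSet_Ioi)
      fun t _ => Hf_zero_bound
  | succ k ih =>
    exact Hf_step_integrable (((Hf_succ_continuousOn ih).mono
      Ioi_subset_Ici_self).aestronglyMeasurable measurableSet_Ioi) fun t ht => Hf_succ_bound ih ht.le

lemma Hf_continuousOn (k : ℕ) : ContinuousOn (Hf k) (Ioi 0) := by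
  cases k with
  | zero => exact Hf_zero_continuousOn
  | succ k => exact (Hf_succ_continuousOn (Hf_integrable k)).mono Ioi_subset_Ici_self

lemma Hf_hasDerivAt (k : ℕ) {t : ℝ} (ht : 0 < t) : HasDerivAt (Hf (k + 1)) (-Hf k t) t := by
  have hi := Hf_integrable k
  have hI : Integrable ((Ioi (0:ℝ)).indicator (Hf k)) :=
    (integrable_indicator_iff measurableSet_Ioi).2 hi
  have hnh : Ioi (0:ℝ) ∈ 𝓝 t := Ioi_mem_nhds ht
  have hev : (Ioi (0:ℝ)).indicator (Hf k) =ᶠ[𝓝 t] Hf k := by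
    filter_upwards [hnh] with x hx using indicator_of_mem hx _
  have hcont : ContinuousAt ((Ioi (0:ℝ)).indicator (Hf k)) t :=
    ((Hf_continuousOn k).continuousAt hnh).congr hev.symm
  have hd := intervalIntegral.integral_hasDerivAt_right
    (hI.intervalIntegrable (a := 0) (b := t)) (hI.aestronglyMeasurable.stronglyMeasurableAtFilter)
    hcont
  rw [hev.eq_of_nhds] at hd
  refine (hd.const_sub (∫ x in Ioi 0, Hf k x)).congr_of_eventuallyEq ?_
  filter_upwards [hnh] with x hx using Hf_succ_eq hi (le_of_lt hx)

lemma Hf_tendsto (k : ℕ) : Tendsto (Hf k) atTop (𝓝 0) := by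
  have h : Tendsto (fun t : ℝ => 1 / t ^ 2) atTop (𝓝 0) := by
    simpa using! (tendsto_pow_atTop (α := ℝ) two_ne_zero).inv_tendsto_atTop
  refine squeeze_zero_norm' ?_ h
  filter_upwards [eventually_gt_atTop 0] with t ht using Hf_bound k ht

/-! ### The multipliers `∫ e^{±ixt} H_r(t) dt` -/

lemma one_sub_cos_bound (t : ℝ) : |(1 - Real.cos t) / t ^ 2| ≤ 1 / 2 := by
  rcases eq_or_ne t 0 with rfl | ht
  · simp
  have ht2 : 0 < t ^ 2 := by positivity
  have a1 := Real.one_sub_sq_div_two_le_cos (x := t)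
  have a3 := Real.cos_le_one t
  rw [abs_of_nonneg (div_nonneg (by linarith) ht2.le), div_le_iff₀ ht2]
  linarith

lemma one_sub_cos_integrable : IntegrableOn (fun t : ℝ => (1 - Real.cos t) / t ^ 2) (Ioi 0) := by
  have hm : Measurable fun t : ℝ => (1 - Real.cos t) / t ^ 2 := by fun_prop
  have hu : Ioi (0:ℝ) = Ioc 0 1 ∪ Ioi 1 := by simp
  rw [hu]
  refine IntegrableOn.union ?_ ?_
  · have hc : IntegrableOn (fun _ : ℝ => (1 / 2 : ℝ)) (Ioc 0 1) := integrableOn_const (by simp)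
    exact hc.mono' hm.aestronglyMeasurable (ae_of_all _ one_sub_cos_bound)
  · have hint : IntegrableOn (fun x : ℝ => 2 * (x ^ (-2:ℝ))) (Ioi 1) :=
      (integrableOn_Ioi_rpow_of_lt (a := -2) (by norm_num) one_pos).const_mul 2
    refine hint.mono' hm.aestronglyMeasurable ?_
    filter_upwards [ae_restrict_mem measurableSet_Ioi] with x hx
    have hx' : (0:ℝ) < x := one_pos.trans hx
    rw [Real.rpow_neg hx'.le, Real.norm_eq_abs, ← div_eq_mul_inv]
    have : x ^ (2:ℝ) = x ^ 2 := by norm_num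
    rw [this, abs_div, abs_of_pos (by positivity : 0 < x ^ 2)]
    gcongr
    have a1 := Real.neg_one_le_cos x
    have a3 := Real.cos_le_one x
    rw [abs_of_nonneg] <;> linarith

lemma integral_exp_mul_one_sub_cos {s : ℝ} (hs : 0 < s) :
    ∫ t in Ioi (0:ℝ), Real.exp (-s * t) * (1 - Real.cos t) = 1 / s - s / (1 + s ^ 2) := by
  have hre : ((-s + I : ℂ)).re < 0 := by simpa using hs
  have h1 := integral_exp_mul_complex_Ioi hre 0
  have i1 := integrableOn_exp_mul_complex_Ioi hre 0
  have h2 := integral_exp_mul_Ioi (a := -s) (by linarith) 0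
  have i2 := integrableOn_exp_mul_Ioi (a := -s) (by linarith) 0
  have hr : ∀ t : ℝ, (Complex.exp ((-s + I) * t)).re = Real.exp (-s * t) * Real.cos t := by
    intro t
    rw [Complex.exp_re]
    simp
  have h3 := integral_re i1
  simp only [RCLike.re_to_complex, hr] at h3
  have i3 : IntegrableOn (fun t : ℝ => Real.exp (-s * t) * Real.cos t) (Ioi 0) := by
    have := i1.re
    simp only [RCLike.re_to_complex, hr] at this
    exact this
  simp_rw [mul_sub, mul_one]
  rw [integral_sub i2 i3, h2, h3, h1]
  simp [Complex.div_re, Complex.normSq_apply]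
  congr 1
  ring

/-- Write `1/t² = ∫ s e^{-st} ds` and exchange the integrals. -/
lemma integral_one_sub_cos_div_sq :
    ∫ t in Ioi (0:ℝ), (1 - Real.cos t) / t ^ 2 = Real.pi / 2 := by
  have hpt : ∀ t : ℝ, 0 < t → ∫ s in Ioi (0:ℝ), s * Real.exp (-s * t) * (1 - Real.cos t)
      = (1 - Real.cos t) / t ^ 2 := by
    intro t ht
    rw [integral_mul_const, integral_id_mul_exp ht]
    ring
  have hm : Measurable fun q : ℝ × ℝ =>
      q.2 * Real.exp (-q.2 * q.1) * (1 - Real.cos q.1) := by fun_prop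
  have hprod : Integrable (fun q : ℝ × ℝ => q.2 * Real.exp (-q.2 * q.1) * (1 - Real.cos q.1))
      ((volume.restrict (Ioi 0)).prod (volume.restrict (Ioi 0))) := by
    rw [integrable_prod_iff hm.aestronglyMeasurable]
    constructor
    · filter_upwards [ae_restrict_mem measurableSet_Ioi] with t ht
      exact (integrable_id_mul_exp ht).mul_const _
    · refine one_sub_cos_integrable.congr ?_
      filter_upwards [ae_restrict_mem measurableSet_Ioi] with t ht
      rw [← hpt t ht]
      refine setIntegral_congr_fun measurableSet_Ioi fun s hs => ?_
      have hs' : (0:ℝ) < s := hs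
      have := Real.cos_le_one t
      rw [Real.norm_of_nonneg]
      exact mul_nonneg (by positivity) (by linarith)
  rw [← setIntegral_congr_fun measurableSet_Ioi (fun t ht => hpt t ht),
    integral_integral_swap hprod]
  have hin : ∀ s : ℝ, 0 < s →
      ∫ t in Ioi (0:ℝ), s * Real.exp (-s * t) * (1 - Real.cos t) = (1 + s ^ 2)⁻¹ := by
    intro s hs
    simp_rw [mul_assoc]
    rw [integral_const_mul, integral_exp_mul_one_sub_cos hs]
    field_simp
    ring
  rw [setIntegral_congr_fun measurableSet_Ioi (fun s hs => hin s hs),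
    integral_Ioi_inv_one_add_sq]
  simp

lemma one_sub_cos_scaled (a : ℝ) :
    IntegrableOn (fun t : ℝ => (1 - Real.cos (a * t)) / t ^ 2) (Ioi 0) ∧
    ∫ t in Ioi (0:ℝ), (1 - Real.cos (a * t)) / t ^ 2 = Real.pi / 2 * |a| := by
  rcases eq_or_ne a 0 with rfl | ha
  · simp
  have hb : 0 < |a| := abs_pos.2 ha
  have he : ∀ t : ℝ, (1 - Real.cos (a * t)) / t ^ 2
      = |a| ^ 2 * ((1 - Real.cos (|a| * t)) / (|a| * t) ^ 2) := by
    intro t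
    have : Real.cos (|a| * t) = Real.cos (a * t) := by
      rcases abs_choice a with h | h <;> rw [h]
      rw [neg_mul, Real.cos_neg]
    rw [this, mul_pow]
    field_simp
  simp_rw [he]
  constructor
  · refine Integrable.const_mul ?_ _
    have := (integrableOn_Ioi_comp_mul_left_iff
      (fun t : ℝ => (1 - Real.cos t) / t ^ 2) 0 hb).2 (by simpa using one_sub_cos_integrable)
    exact this
  · rw [integral_const_mul,
      integral_comp_mul_left_Ioi (fun t : ℝ => (1 - Real.cos t) / t ^ 2) 0 hb, mul_zero,
      integral_one_sub_cos_div_sq, smul_eq_mul]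
    field_simp

/-- The even (`r` even) or odd (`r` odd) combination `e^{ixt} ± e^{-ixt}`. -/
def eker (r : ℕ) (x t : ℝ) : ℂ :=
  Complex.exp (x * t * I) + (-1) ^ r * Complex.exp (-(x * t * I))

/-- The Fourier multiplier `∫_0^∞ (e^{ixt} + (-1)^r e^{-ixt}) H_r(t) dt`. -/
def Ak (r : ℕ) (x : ℝ) : ℂ := ∫ t in Ioi (0:ℝ), eker r x t * (Hf r t : ℂ)

/-- The trapezoid: `1` on `[-1, 1]`, `0` outside `[-2, 2]`, linear in between. -/
def trap (x : ℝ) : ℝ := (|2 + x| + |2 - x| - |1 + x| - |1 - x|) / 2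

lemma trap_one {x : ℝ} (h0 : 0 ≤ x) (h1 : x ≤ 1) : trap x = 1 := by
  rw [trap, abs_of_nonneg, abs_of_nonneg, abs_of_nonneg, abs_of_nonneg] <;> linarith

lemma trap_zero {x : ℝ} (h0 : 2 ≤ x) : trap x = 0 := by
  rw [trap, abs_of_nonneg, abs_of_nonpos, abs_of_nonneg, abs_of_nonpos] <;> linarith

lemma norm_eker_le (r : ℕ) (x t : ℝ) : ‖eker r x t‖ ≤ 2 := by
  unfold eker
  refine (norm_add_le _ _).trans ?_
  have e1 : (x * t * I : ℂ) = ((x * t : ℝ) : ℂ) * I := by push_cast; ring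
  have e2 : (-(x * t * I) : ℂ) = ((-(x * t) : ℝ) : ℂ) * I := by push_cast; ring
  rw [norm_mul, norm_pow, norm_neg, norm_one, one_pow, one_mul, e2, e1,
    Complex.norm_exp_ofReal_mul_I, Complex.norm_exp_ofReal_mul_I]
  norm_num

lemma Ak_integrable (r : ℕ) (x : ℝ) {k : ℕ} :
    IntegrableOn (fun t => eker r x t * (Hf k t : ℂ)) (Ioi 0) := by
  refine (Hf_integrable k).ofReal.bdd_mul (c := 2) ?_ (ae_of_all _ fun t => norm_eker_le r x t)
  unfold eker
  exact Continuous.aestronglyMeasurable (by fun_prop)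

lemma Ak_continuous (r : ℕ) : Continuous (Ak r) := by
  unfold Ak
  refine continuous_of_dominated (bound := fun t => 2 * |Hf r t|)
    (fun x => (Ak_integrable r x).aestronglyMeasurable) (fun x => ae_of_all _ fun t => ?_)
    ((Hf_integrable r).norm.const_mul 2) (ae_of_all _ fun t => ?_)
  · rw [norm_mul, Complex.norm_real]
    exact mul_le_mul_of_nonneg_right (norm_eker_le r x t) (norm_nonneg _)
  · unfold eker
    fun_prop

/-- Integration by parts, using `H_{r+1}' = -H_r`. -/
lemma Ak_rec (r : ℕ) (x : ℝ) :
    Ak r x = eker r x 0 * (Hf (r + 1) 0 : ℂ) + I * x * Ak (r + 1) x := by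
  have hu : ∀ t ∈ Ioi (0:ℝ), HasDerivAt (eker r x) (I * x * eker (r + 1) x t) t := by
    intro t _
    have h0 : HasDerivAt (fun t : ℝ => (x * t * I : ℂ)) (x * I) t := by
      have := ((Complex.ofRealCLM.hasDerivAt (x := t)).const_mul (x : ℂ)).mul_const I
      simpa using this
    have hn : HasDerivAt (fun t : ℝ => (-(x * t * I) : ℂ)) (-(x * I)) t := h0.neg
    have := h0.cexp.add ((hn.cexp).const_mul ((-1 : ℂ) ^ r))
    refine HasDerivAt.congr_deriv this ?_
    simp only [eker, pow_succ]
    ring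
  have hv : ∀ t ∈ Ioi (0:ℝ), HasDerivAt (fun t => (Hf (r + 1) t : ℂ)) ((-Hf r t : ℝ) : ℂ) t :=
    fun t ht => (Hf_hasDerivAt r ht).ofReal_comp
  have key := integral_Ioi_mul_deriv_eq_deriv_mul (a := 0) (a' := eker r x 0 * (Hf (r + 1) 0 : ℂ))
    (b' := 0) hu hv ?_ ?_ ?_ ?_
  · have h1 : ∫ t in Ioi (0:ℝ), eker r x t * ((-Hf r t : ℝ) : ℂ) = -Ak r x := by
      rw [Ak, ← integral_neg]
      simp
    have h2 : ∫ t in Ioi (0:ℝ), I * x * eker (r + 1) x t * (Hf (r + 1) t : ℂ)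
        = I * x * Ak (r + 1) x := by
      rw [Ak, ← integral_const_mul]
      simp only [mul_assoc]
    rw [h1, h2] at key
    linear_combination -key
  · refine (Ak_integrable r x (k := r)).neg.congr (ae_of_all _ fun t => ?_)
    simp
  · refine ((Ak_integrable (r + 1) x (k := r + 1)).const_mul (I * x)).congr
      (ae_of_all _ fun t => ?_)
    simp only [Pi.mul_apply]
    ring
  · have c1 : ContinuousWithinAt (fun t => (Hf (r + 1) t : ℂ)) (Ioi 0) 0 :=
      (Complex.continuous_ofReal.continuousAt.comp_continuousWithinAt
        ((Hf_succ_continuousOn (Hf_integrable r)) 0 self_mem_Ici)).mono Ioi_subset_Ici_self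
    have c2 : Continuous (eker r x) := by unfold eker; fun_prop
    exact (c2.continuousWithinAt (s := Ioi 0)).mul c1
  · refine squeeze_zero_norm (a := fun t => 2 * |Hf (r + 1) t|) (fun t => ?_) ?_
    · rw [Pi.mul_apply, norm_mul, Complex.norm_real]
      exact mul_le_mul_of_nonneg_right (norm_eker_le r x t) (norm_nonneg _)
    · simpa using (Hf_tendsto (r + 1)).abs.const_mul 2

lemma eker_zero_right (r : ℕ) (x : ℝ) : eker r x 0 = 1 + (-1) ^ r := by simp [eker]

lemma Ak_at_zero (r : ℕ) : Ak r 0 = (1 + (-1) ^ r) * (Hf (r + 1) 0 : ℂ) := by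
  rw [Ak_rec]
  simp [eker_zero_right]

/-- `2 cos(xt) h(t)` is a combination of four terms `1 - cos(ct)`, with `c = 2 ± x, 1 ± x`. -/
lemma Ak_zero (x : ℝ) : Ak 0 x = Real.pi / 2 * trap x := by
  have h : ∀ t : ℝ, eker 0 x t * (Hf 0 t : ℂ) = ((1 / 2 *
      ((1 - Real.cos ((2 + x) * t)) / t ^ 2 + (1 - Real.cos ((2 - x) * t)) / t ^ 2
      - (1 - Real.cos ((1 + x) * t)) / t ^ 2 - (1 - Real.cos ((1 - x) * t)) / t ^ 2) : ℝ) : ℂ) := by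
    intro t
    have e : eker 0 x t = ((2 * Real.cos (x * t) : ℝ) : ℂ) := by
      rw [eker]
      push_cast
      rw [Complex.cos]
      ring_nf
    rw [e, ← Complex.ofReal_mul]
    congr 1
    rw [Hf]
    have c1 : Real.cos ((2 + x) * t) + Real.cos ((2 - x) * t)
        = 2 * Real.cos (x * t) * Real.cos (2 * t) := by
      rw [add_mul, sub_mul, Real.cos_add, Real.cos_sub]; ring
    have c2 : Real.cos ((1 + x) * t) + Real.cos ((1 - x) * t)
        = 2 * Real.cos (x * t) * Real.cos t := by
      rw [add_mul, sub_mul, Real.cos_add, Real.cos_sub]; ring_nf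
    linear_combination (-(1 / 2) / t ^ 2) * c2 + (1 / 2) / t ^ 2 * c1
  unfold Ak
  simp_rw [h]
  obtain ⟨i1, e1⟩ := one_sub_cos_scaled (2 + x)
  obtain ⟨i2, e2⟩ := one_sub_cos_scaled (2 - x)
  obtain ⟨i3, e3⟩ := one_sub_cos_scaled (1 + x)
  obtain ⟨i4, e4⟩ := one_sub_cos_scaled (1 - x)
  rw [integral_complex_ofReal, integral_const_mul]
  have s0 := integral_sub ((i1.add i2).sub i3) i4
  have s1 := integral_sub (i1.add i2) i3
  have s2 := integral_add i1 i2
  simp only [Pi.add_apply, Pi.sub_apply] at s0 s1 s2 ⊢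
  rw [s0, s1, s2, e1, e2, e3, e4, trap]
  push_cast
  ring

/-- The multiplier identity: `Ak r`, up to the constant `-π/2`, undoes `r` angular derivatives on
the part `1 - trap` of the spectrum. -/
lemma Ak_mul (r : ℕ) (hr : 1 ≤ r) (x : ℝ) :
    (I * x) ^ r * Ak r x = -(Real.pi / 2) * (1 - trap x) := by
  induction r, hr using Nat.le_induction generalizing x with
  | base =>
    have h1 := Ak_rec 0 x
    have h2 := Ak_at_zero 0
    rw [Ak_zero, trap_one le_rfl zero_le_one] at h2
    rw [eker_zero_right, ← h2, Ak_zero] at h1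
    rw [pow_one]
    push_cast at h1
    linear_combination -h1
  | succ r hr ih =>
    -- The boundary term of the integration by parts equals `Ak r 0`, and `Ak r` vanishes on `(0, 1)`
    -- because `trap = 1` there.
    have hz : (1 + (-1) ^ r) * (Hf (r + 1) 0 : ℂ) = 0 := by
      rw [← Ak_at_zero]
      have hE : EqOn (Ak r) (fun _ => 0) (Ioo 0 1) := by
        intro y hy
        have := ih y
        rw [trap_one hy.1.le hy.2.le] at this
        have hy0 : (y : ℂ) ≠ 0 := by exact_mod_cast hy.1.ne'
        simpa [hy0] using this
      have := hE.closure (Ak_continuous r) continuous_const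
      rw [closure_Ioo zero_ne_one] at this
      exact this ⟨le_rfl, zero_le_one⟩
    have h1 := Ak_rec r x
    rw [eker_zero_right, hz, zero_add] at h1
    rw [pow_succ, mul_assoc, ← h1, ih]

lemma one_le_Cc_zero : 1 ≤ Cc 0 := by
  have h1 : Ak 0 0 = Real.pi / 2 := by rw [Ak_zero, trap_one le_rfl zero_le_one]; simp
  have h2 : ‖Ak 0 0‖ ≤ ∫ t in Ioi (0:ℝ), 2 * |Hf 0 t| := by
    refine norm_integral_le_of_norm_le ((Hf_integrable 0).norm.const_mul 2)
      (ae_of_all _ fun t => ?_)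
    rw [norm_mul, Complex.norm_real]
    exact mul_le_mul_of_nonneg_right (norm_eker_le 0 0 t) (norm_nonneg _)
  rw [h1, integral_const_mul] at h2
  have h3 : ‖(Real.pi / 2 : ℂ)‖ = Real.pi / 2 := by
    have : (Real.pi / 2 : ℂ) = ((Real.pi / 2 : ℝ) : ℂ) := by push_cast; ring
    rw [this, Complex.norm_real, Real.norm_of_nonneg (by positivity)]
  rw [h3] at h2
  rw [Cc, div_mul_eq_mul_div, le_div_iff₀ Real.pi_pos]
  linarith

lemma Cc_nonneg (k : ℕ) : 0 ≤ Cc k :=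
  mul_nonneg (by positivity) (integral_nonneg fun _ => abs_nonneg _)

/-! ### Power series on the disc -/

/-- `PS b F` says that `F` is the sum of the power series `∑ b k z^k` on the unit disc. -/
def PS (b : ℕ → ℂ) (F : ℂ → ℂ) : Prop :=
  ∀ z ∈ unitDisc, HasSum (fun k => b k * z ^ k) (F z)

lemma mem_unitDisc {z : ℂ} : z ∈ unitDisc ↔ ‖z‖ < 1 := by
  simp [unitDisc]

lemma measurableSet_unitDisc : MeasurableSet unitDisc := measurableSet_ball

namespace PS

variable {b c : ℕ → ℂ} {F G : ℂ → ℂ}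

lemma summable_norm (h : PS b F) {r : ℝ} (h0 : 0 ≤ r) (h1 : r < 1) :
    Summable fun k => ‖b k‖ * r ^ k := by
  have hr : (r : ℂ) ∈ unitDisc := by
    rw [mem_unitDisc, Complex.norm_real, Real.norm_of_nonneg h0]
    exact h1
  have := (h _ hr).summable.norm
  simpa [abs_of_nonneg h0] using this

lemma add (hF : PS b F) (hG : PS c G) : PS (fun k => b k + c k) (fun z => F z + G z) := by
  intro z hz
  simpa [add_mul] using (hF z hz).add (hG z hz)

lemma const_mul (a : ℂ) (hF : PS b F) : PS (fun k => a * b k) (fun z => a * F z) := by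
  intro z hz
  simpa [mul_assoc] using (hF z hz).mul_left a

lemma eq_on (hF : PS b F) (hG : PS b G) {z : ℂ} (hz : z ∈ unitDisc) : F z = G z :=
  (hF z hz).unique (hG z hz)

lemma rot (hF : PS b F) {u : ℂ} (hu : ‖u‖ = 1) :
    PS (fun k => b k * u ^ k) (fun z => F (u * z)) := by
  intro z hz
  have : u * z ∈ unitDisc := by
    rw [mem_unitDisc] at *
    rwa [norm_mul, hu, one_mul]
  simpa [mul_pow, mul_assoc] using hF _ this

lemma exists_mul (hF : PS b F) {C : ℝ} (hc : ∀ k, ‖c k‖ ≤ C) :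
    ∃ G, PS (fun k => b k * c k) G := by
  refine ⟨fun z => ∑' k, b k * c k * z ^ k, fun z hz => Summable.hasSum ?_⟩
  have h := (hF.summable_norm (norm_nonneg z) (mem_unitDisc.1 hz)).mul_left C
  refine Summable.of_norm_bounded h fun k => ?_
  rw [norm_mul, norm_mul, norm_pow]
  calc ‖b k‖ * ‖c k‖ * ‖z‖ ^ k = ‖c k‖ * (‖b k‖ * ‖z‖ ^ k) := by ring
    _ ≤ C * (‖b k‖ * ‖z‖ ^ k) := by gcongr; exact hc k

lemma of_differentiableOn (hF : DifferentiableOn ℂ F unitDisc) : ∃ a, PS a F := by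
  refine ⟨fun n => (n.factorial : ℂ)⁻¹ * iteratedDeriv n F 0, fun z hz => ?_⟩
  have := Complex.hasSum_taylorSeries_on_ball hF hz
  simpa [mul_assoc, mul_comm, mul_left_comm] using this

/-- The angular derivative multiplies the `k`-th coefficient by `i k`. -/
lemma dth (hF : PS b F) : PS (fun k => b k * (I * k)) (Dth F) := by
  intro z hz
  rw [mem_unitDisc] at hz
  obtain ⟨r, hzr, hr1⟩ := exists_between hz
  have hr0 : 0 ≤ r := (norm_nonneg z).trans hzr.le
  have hsub : ∀ w ∈ ball (0:ℂ) r, ‖w‖ < r := fun w hw => by simpa using hw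
  have key := Complex.hasSum_deriv_of_summable_norm (F := fun k w => b k * w ^ k)
    (U := ball (0:ℂ) r) (z := z) (hF.summable_norm hr0 hr1) (fun k => by fun_prop) isOpen_ball
    (fun k w hw => by
      rw [norm_mul, norm_pow]
      gcongr
      exact (hsub w hw).le) (by simpa using hzr)
  have he : deriv (fun w => ∑' k, b k * w ^ k) z = deriv F z := by
    apply Filter.EventuallyEq.deriv_eq
    filter_upwards [isOpen_ball.mem_nhds (show z ∈ ball (0:ℂ) r by simpa using hzr)] with w hw
    exact (hF w (mem_unitDisc.2 ((hsub w hw).trans hr1))).tsum_eq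
  rw [he] at key
  have h2 := key.mul_left (I * z)
  have h3 : ∀ k : ℕ, I * z * deriv (fun w => b k * w ^ k) z = b k * (I * k) * z ^ k := by
    intro k
    rw [deriv_const_mul_field, deriv_pow_field]
    rcases k with _ | k
    · simp
    · simp only [Nat.add_sub_cancel, pow_succ]
      ring
  exact (funext h3 ▸ h2 :)

lemma dth_iterate (hF : PS b F) (K : ℕ) : PS (fun k => b k * (I * k) ^ K) (Dth^[K] F) := by
  induction K with
  | zero => simpa using hF
  | succ K ih =>
    rw [Function.iterate_succ_apply']
    simpa [pow_succ, mul_assoc] using ih.dth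

/-- A function given by a power series on the disc, cut off outside the disc, is measurable. -/
lemma measurable_indicator (hF : PS b F) : Measurable (unitDisc.indicator F) := by
  refine measurable_of_tendsto_metrizable
    (f := fun n => unitDisc.indicator fun z => ∑ k ∈ Finset.range n, b k * z ^ k) ?_ ?_
  · intro n
    exact Measurable.indicator (by fun_prop) measurableSet_unitDisc
  · rw [tendsto_pi_nhds]
    intro z
    by_cases hz : z ∈ unitDisc
    · simpa [hz] using (hF z hz).tendsto_sum_nat
    · simp [hz]

lemma indicator (hF : PS b F) : PS b (unitDisc.indicator F) := by
  intro z hz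
  simpa [hz] using hF z hz

end PS

/-! ### The weighted measure and Minkowski's inequality -/

/-- The measure `dA_α` of the unit disc, as a measure on `ℂ` that vanishes off the disc. -/
def bMeas (α : ℝ) : Measure ℂ :=
  (volume.restrict unitDisc).withDensity fun z => ENNReal.ofReal (wt α z)

lemma measurable_wt (α : ℝ) : Measurable (wt α) := by
  unfold wt
  fun_prop

instance (α : ℝ) : SFinite (bMeas α) := by unfold bMeas; infer_instance

lemma bMeas_ac (α : ℝ) : bMeas α ≪ volume.restrict unitDisc :=
  withDensity_absolutelyContinuous _ _

lemma ae_bMeas (α : ℝ) : ∀ᵐ z ∂bMeas α, z ∈ unitDisc :=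
  (bMeas_ac α).ae_le (ae_restrict_mem measurableSet_unitDisc)

lemma wt_nonneg {α : ℝ} (hα : -1 < α) {z : ℂ} (hz : z ∈ unitDisc) : 0 ≤ wt α z := by
  rw [mem_unitDisc] at hz
  unfold wt
  have h1 : 0 ≤ 1 - ‖z‖ ^ 2 := by nlinarith [norm_nonneg z]
  have h2 : 0 ≤ (α + 1) / Real.pi := div_nonneg (by linarith) Real.pi_pos.le
  exact mul_nonneg h2 (Real.rpow_nonneg h1 _)

lemma PS.aesm {b : ℕ → ℂ} {F : ℂ → ℂ} (hF : PS b F) :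
    AEStronglyMeasurable F (volume.restrict unitDisc) := by
  refine hF.measurable_indicator.aestronglyMeasurable.congr ?_
  filter_upwards [ae_restrict_mem measurableSet_unitDisc] with z hz
  simp [hz]

lemma PS.aesm' {b : ℕ → ℂ} {F : ℂ → ℂ} (hF : PS b F) (α : ℝ) :
    AEStronglyMeasurable F (bMeas α) := hF.aesm.mono_ac (bMeas_ac α)

lemma eLpNorm_bMeas_congr {α : ℝ} {q : ENNReal} {F G : ℂ → ℂ} (h : ∀ z ∈ unitDisc, F z = G z) :
    eLpNorm F q (bMeas α) = eLpNorm G q (bMeas α) := by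
  apply eLpNorm_congr_ae
  filter_upwards [ae_bMeas α] with z hz using h z hz

lemma eLpNorm_bMeas_eq {p α : ℝ} (hp : 0 < p) (F : ℂ → ℂ) :
    eLpNorm F (ENNReal.ofReal p) (bMeas α)
      = (∫⁻ z, ‖F z‖ₑ ^ p ∂bMeas α) ^ (1 / p) := by
  rw [eLpNorm_eq_lintegral_rpow_enorm_toReal (by simpa using hp) ENNReal.ofReal_ne_top,
    ENNReal.toReal_ofReal hp.le]

lemma lintegral_bMeas_eq {p α : ℝ} (hp : 0 < p) (F : ℂ → ℂ) :
    ∫⁻ z, ‖F z‖ₑ ^ p ∂bMeas α = ∫⁻ z in unitDisc, ENNReal.ofReal (‖F z‖ ^ p * wt α z) := by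
  rw [bMeas, lintegral_withDensity_eq_lintegral_mul_non_measurable _
    (measurable_wt α).ennreal_ofReal (by simp)]
  refine setLIntegral_congr_fun measurableSet_unitDisc fun z hz => ?_
  rw [Pi.mul_apply, ENNReal.ofReal_mul (by positivity), mul_comm,
    ← ENNReal.ofReal_rpow_of_nonneg (norm_nonneg _) hp.le, ofReal_norm]

/-- The Bergman norm is the `L^p(dA_α)` norm; if the latter is infinite both sides are `0`. -/
lemma bNorm_eq {p α : ℝ} (hp : 0 < p) (hα : -1 < α) {F : ℂ → ℂ}
    (hF : AEStronglyMeasurable F (volume.restrict unitDisc)) :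
    bNorm p α F = (eLpNorm F (ENNReal.ofReal p) (bMeas α)).toReal := by
  rw [eLpNorm_bMeas_eq hp, lintegral_bMeas_eq hp, ← ENNReal.toReal_rpow, bNorm]
  congr 1
  apply integral_eq_lintegral_of_nonneg_ae
  · filter_upwards [ae_restrict_mem measurableSet_unitDisc] with z hz
    exact mul_nonneg (by positivity) (wt_nonneg hα hz)
  · exact (hF.norm.aemeasurable.pow_const p).aestronglyMeasurable.mul
      (measurable_wt α).aestronglyMeasurable

lemma MemAp.eLpNorm_ne_top {p α : ℝ} (hp : 0 < p) {F : ℂ → ℂ}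
    (hF : MemAp p α F) : eLpNorm F (ENNReal.ofReal p) (bMeas α) ≠ ⊤ := by
  rw [eLpNorm_bMeas_eq hp, lintegral_bMeas_eq hp]
  exact ENNReal.rpow_ne_top_of_nonneg (by positivity) hF.2.lintegral_lt_top.ne

lemma rot_measurePreserving {u : ℂ} (hu : ‖u‖ = 1) (α : ℝ) :
    MeasurePreserving (fun z => u * z) (bMeas α) (bMeas α) := by
  have h0 : MeasurePreserving (fun z : ℂ => u * z) volume volume := by
    have := (rotation (⟨u, by simpa [Submonoid.unitSphere, mem_sphere_iff_norm] using hu⟩ :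
      Circle)).measurePreserving
    exact this
  have hpre : (fun z : ℂ => u * z) ⁻¹' unitDisc = unitDisc := by
    ext z
    simp [mem_unitDisc, hu]
  refine ⟨h0.measurable, ?_⟩
  ext s hs
  have hs' : MeasurableSet ((fun z : ℂ => u * z) ⁻¹' s) := h0.measurable hs
  rw [Measure.map_apply h0.measurable hs, bMeas, withDensity_apply _ hs', withDensity_apply _ hs]
  have h1 := h0.restrict_preimage measurableSet_unitDisc
  rw [hpre] at h1
  rw [← h1.setLIntegral_comp_preimage hs (measurable_wt α).ennreal_ofReal]
  simp [wt, hu]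

lemma PS.eLpNorm_rot {b : ℕ → ℂ} {F : ℂ → ℂ} (hF : PS b F) {u : ℂ} (hu : ‖u‖ = 1) (α : ℝ)
    (q : ENNReal) : eLpNorm (fun z => F (u * z)) q (bMeas α) = eLpNorm F q (bMeas α) :=
  eLpNorm_comp_measurePreserving (hF.aesm' α) (rot_measurePreserving hu α)

/-- Minkowski's integral inequality for a uniformly bounded family, by Hölder in `t` and Tonelli. -/
lemma minkowski {p : ℝ} (hp : 1 < p) {μ : Measure ℂ} [SFinite μ] {lam : Measure ℝ} [SFinite lam]
    {H : ℝ → ℂ → ENNReal} (hH : Measurable (Function.uncurry H)) {B : ENNReal}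
    (hB : ∀ᵐ t ∂lam, (∫⁻ z, H t z ^ p ∂μ) ^ (1 / p) ≤ B) :
    (∫⁻ z, (∫⁻ t, H t z ∂lam) ^ p ∂μ) ^ (1 / p) ≤ lam univ * B := by
  have hp0 : 0 < p := by linarith
  have jensen : ∀ z, (∫⁻ t, H t z ∂lam) ^ p ≤ lam univ ^ (p - 1) * ∫⁻ t, H t z ^ p ∂lam := by
    intro z
    have hm : Measurable fun t => H t z := hH.comp (measurable_id.prodMk measurable_const)
    have hq : p.HolderConjugate (p / (p - 1)) := Real.HolderConjugate.conjExponent hp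
    have h := ENNReal.lintegral_mul_le_Lp_mul_Lq lam hq hm.aemeasurable
      (aemeasurable_const (b := (1 : ENNReal)))
    simp only [Pi.mul_apply, mul_one, ENNReal.one_rpow, lintegral_const, one_mul] at h
    calc (∫⁻ t, H t z ∂lam) ^ p
        ≤ ((∫⁻ t, H t z ^ p ∂lam) ^ (1 / p) * lam univ ^ (1 / (p / (p - 1)))) ^ p := by gcongr
      _ = lam univ ^ (p - 1) * ∫⁻ t, H t z ^ p ∂lam := by
          rw [ENNReal.mul_rpow_of_nonneg _ _ hp0.le, ← ENNReal.rpow_mul, ← ENNReal.rpow_mul,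
            mul_comm]
          congr 2
          · field_simp
          · rw [one_div_mul_cancel hp0.ne', ENNReal.rpow_one]
  have hB' : ∀ᵐ t ∂lam, ∫⁻ z, H t z ^ p ∂μ ≤ B ^ p := by
    filter_upwards [hB] with t ht
    rwa [one_div, ENNReal.rpow_inv_le_iff hp0] at ht
  have hHp : Measurable fun x : ℂ × ℝ => H x.2 x.1 ^ p :=
    (hH.comp measurable_swap).pow_const p
  calc (∫⁻ z, (∫⁻ t, H t z ∂lam) ^ p ∂μ) ^ (1 / p)
      ≤ (∫⁻ z, lam univ ^ (p - 1) * ∫⁻ t, H t z ^ p ∂lam ∂μ) ^ (1 / p) := by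
        gcongr with z
        exact jensen z
    _ = (lam univ ^ (p - 1) * ∫⁻ t, ∫⁻ z, H t z ^ p ∂μ ∂lam) ^ (1 / p) := by
        rw [lintegral_const_mul _ hHp.lintegral_prod_right', lintegral_lintegral_swap]
        exact hHp.aemeasurable
    _ ≤ (lam univ ^ (p - 1) * (B ^ p * lam univ)) ^ (1 / p) := by
        gcongr
        rw [← lintegral_const]
        exact lintegral_mono_ae hB'
    _ = lam univ * B := by
        have : lam univ ^ (p - 1) * (B ^ p * lam univ) = (lam univ * B) ^ p := by
          rw [ENNReal.mul_rpow_of_nonneg _ _ hp0.le]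
          have h1 : lam univ ^ p = lam univ ^ (p - 1) * lam univ := by
            conv_rhs => rw [← ENNReal.rpow_one (lam univ), ← ENNReal.rpow_mul, one_mul]
            rw [← ENNReal.rpow_add_of_nonneg _ _ (by linarith) zero_le_one]
            congr 1
            ring
          rw [h1]
          ring
        rw [this, ← ENNReal.rpow_mul, mul_one_div_cancel hp0.ne', ENNReal.rpow_one]

/-! ### Multipliers that average rotations -/

/-- The multiplier `∫ k(t) e_j(t) dν(t)` acts as the average of the operators with multipliers
`e_j(t)`, by summing the power series under the integral. -/
lemma conv_repr {ν : Measure ℝ} {k : ℝ → ℂ} (hk : Integrable k ν) {b : ℕ → ℂ} {g F : ℂ → ℂ}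
    (hb : PS b g) {e : ℕ → ℝ → ℂ} (he : ∀ j, Measurable (e j)) {C : ℝ} (hC : ∀ j t, ‖e j t‖ ≤ C)
    {G : ℝ → ℂ → ℂ} (hG : ∀ t, PS (fun j => b j * e j t) (G t))
    (hF : PS (fun j => b j * ∫ t, k t * e j t ∂ν) F) {z : ℂ} (hz : z ∈ unitDisc) :
    F z = ∫ t, k t * G t z ∂ν := by
  have hi : ∀ j, Integrable (fun t => k t * e j t) ν := fun j =>
    hk.mul_bdd (c := C) (he j).aestronglyMeasurable (ae_of_all _ (hC j))
  have hi2 : ∀ j, Integrable (fun t => b j * z ^ j * (k t * e j t)) ν := fun j =>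
    (hi j).const_mul _
  have hs : Summable fun j => ∫ t, ‖b j * z ^ j * (k t * e j t)‖ ∂ν := by
    have h := (hb.summable_norm (norm_nonneg z) (mem_unitDisc.1 hz)).mul_right (C * ∫ t, ‖k t‖ ∂ν)
    refine Summable.of_nonneg_of_le (fun j => by positivity) (fun j => ?_) h
    have h1 : ∫ t, ‖k t * e j t‖ ∂ν ≤ C * ∫ t, ‖k t‖ ∂ν := by
      rw [← integral_const_mul]
      refine integral_mono (hi j).norm (hk.norm.const_mul C) fun t => ?_
      simp only [norm_mul]
      rw [mul_comm]
      gcongr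
      exact hC j t
    have h2 : ∫ t, ‖b j * z ^ j * (k t * e j t)‖ ∂ν
        = ‖b j‖ * ‖z‖ ^ j * ∫ t, ‖k t * e j t‖ ∂ν := by
      rw [← integral_const_mul]
      simp only [norm_mul, norm_pow]
    rw [h2]
    gcongr
  have key := hasSum_integral_of_summable_integral_norm hi2 hs
  have e1 : ∀ j, ∫ t, b j * z ^ j * (k t * e j t) ∂ν
      = (b j * ∫ t, k t * e j t ∂ν) * z ^ j := by
    intro j
    rw [integral_const_mul]
    ring
  have e2 : ∀ t, ∑' j, b j * z ^ j * (k t * e j t) = k t * G t z := by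
    intro t
    have := (hG t z hz).mul_left (k t)
    rw [← this.tsum_eq]
    congr 1
    ext j
    ring
  simp only [e1, e2] at key
  exact (hF z hz).unique key

/-- Norm bound for the function `F` obtained from `g` by the multiplier `∫ k(t) e_j(t) dν(t)`, when
the functions `G t` obtained from `g` by the multipliers `e_j(t)` have norm at most `W(t) B`.
Minkowski's inequality is applied to `|G t| / W(t)`, with `|k| W dν` as the averaging measure. -/
lemma conv_bound {p : ℝ} (hp : 1 < p) (α : ℝ) {ν : Measure ℝ} [SFinite ν] {k : ℝ → ℂ}
    (hk : Integrable k ν) {b : ℕ → ℂ} {g F : ℂ → ℂ}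
    (hb : PS b g) {e : ℕ → ℝ → ℂ} (he : ∀ j, Measurable (e j)) {C : ℝ} (hC : ∀ j t, ‖e j t‖ ≤ C)
    {G : ℝ → ℂ → ℂ} (hG : ∀ t, PS (fun j => b j * e j t) (G t))
    (hGm : Measurable (Function.uncurry G))
    (hF : PS (fun j => b j * ∫ t, k t * e j t ∂ν) F) {W : ℝ → ENNReal} (hW : Measurable W)
    (hW0 : ∀ᵐ t ∂ν, W t ≠ 0) (hWt : ∀ t, W t ≠ ⊤) {B : ENNReal}
    (hB : ∀ᵐ t ∂ν, eLpNorm (G t) (ENNReal.ofReal p) (bMeas α) ≤ W t * B) :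
    eLpNorm F (ENNReal.ofReal p) (bMeas α) ≤ (∫⁻ t, ‖k t‖ₑ * W t ∂ν) * B := by
  have hp0 : 0 < p := by linarith
  set lam : Measure ℝ := ν.withDensity fun t => ‖k t‖ₑ * W t with hlam
  have hkm : AEMeasurable (fun t => ‖k t‖ₑ * W t) ν :=
    hk.aestronglyMeasurable.enorm.mul hW.aemeasurable
  have hH : Measurable (Function.uncurry fun t z => ‖G t z‖ₑ * (W t)⁻¹) :=
    hGm.enorm.mul (hW.comp measurable_fst).inv
  have hac : lam ≪ ν := withDensity_absolutelyContinuous _ _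
  have hmink := minkowski hp (μ := bMeas α) (lam := lam) hH (B := B) (by
    filter_upwards [hac.ae_le hB, hac.ae_le hW0] with t ht ht0
    have hm : Measurable (G t) := hGm.comp (measurable_const.prodMk measurable_id)
    rw [eLpNorm_bMeas_eq hp0] at ht
    simp only [ENNReal.mul_rpow_of_nonneg _ _ hp0.le]
    rw [lintegral_mul_const _ (hm.enorm.pow_const p),
      ENNReal.mul_rpow_of_nonneg _ _ (by positivity), ← ENNReal.rpow_mul,
      mul_one_div_cancel hp0.ne', ENNReal.rpow_one, ← div_eq_mul_inv]
    exact ENNReal.div_le_of_le_mul' ht)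
  have hlu : lam univ = ∫⁻ t, ‖k t‖ₑ * W t ∂ν := by
    rw [hlam, withDensity_apply _ MeasurableSet.univ, Measure.restrict_univ]
  rw [← hlu]
  refine le_trans ?_ hmink
  rw [eLpNorm_bMeas_eq hp0]
  refine ENNReal.rpow_le_rpow (lintegral_mono_ae ?_) (by positivity)
  filter_upwards [ae_bMeas α] with z hz
  refine ENNReal.rpow_le_rpow ?_ hp0.le
  have hm : Measurable fun t => ‖G t z‖ₑ * (W t)⁻¹ :=
    hH.comp (measurable_id.prodMk measurable_const)
  rw [hlam, lintegral_withDensity_eq_lintegral_mul₀ hkm hm.aemeasurable,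
    conv_repr hk hb he hC hG hF hz]
  refine (enorm_integral_le_lintegral_enorm _).trans (lintegral_mono_ae ?_)
  filter_upwards [hW0] with t ht
  rw [Pi.mul_apply, enorm_mul]
  have : ‖k t‖ₑ * W t * (‖G t z‖ₑ * (W t)⁻¹) = ‖k t‖ₑ * ‖G t z‖ₑ * (W t * (W t)⁻¹) := by ring
  rw [this, ENNReal.mul_inv_cancel ht (hWt t), mul_one]

lemma norm_exp_I (x : ℝ) : ‖cexp (x * I)‖ = 1 := Complex.norm_exp_ofReal_mul_I x

/-- The two-sided rotation combination `g(e^{is} z) + ε g(e^{-is} z) + η g(z)`. -/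
def rotSum (ε η : ℂ) (g : ℂ → ℂ) (s : ℝ) (z : ℂ) : ℂ :=
  g (cexp (s * I) * z) + ε * g (cexp ((-s : ℝ) * I) * z) + η * g z

/-- The multiplier of `rotSum`. -/
def rotMul (ε η : ℂ) (j : ℕ) (s : ℝ) : ℂ :=
  cexp (s * I) ^ j + ε * cexp ((-s : ℝ) * I) ^ j + η

lemma PS.rotSum {b : ℕ → ℂ} {g : ℂ → ℂ} (hb : PS b g) (ε η : ℂ) (s : ℝ) :
    PS (fun j => b j * rotMul ε η j s) (_root_.rotSum ε η g s) := by
  unfold _root_.rotSum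
  have := ((hb.rot (norm_exp_I s)).add ((hb.rot (norm_exp_I (-s))).const_mul ε)).add
    (hb.const_mul η)
  convert this using 1
  ext j
  unfold rotMul
  ring

lemma measurable_rotMul (ε η : ℂ) (j : ℕ) : Measurable (rotMul ε η j) := by
  unfold rotMul
  fun_prop

lemma norm_rotMul_le (ε η : ℂ) (j : ℕ) (s : ℝ) : ‖rotMul ε η j s‖ ≤ 1 + ‖ε‖ + ‖η‖ := by
  refine (norm_add₃_le).trans ?_
  rw [norm_mul, norm_pow, norm_pow, norm_exp_I, norm_exp_I]
  simp

lemma measurable_rotSum {g : ℂ → ℂ} (hg : Measurable g) (ε η : ℂ) (c : ℝ) :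
    Measurable (Function.uncurry fun t => rotSum ε η g (c * t)) := by
  unfold rotSum
  refine ((hg.comp ?_).add ((hg.comp ?_).const_mul ε)).add
    ((hg.comp measurable_snd).const_mul η)
  · fun_prop
  · fun_prop

lemma eLpNorm_rotSum_le {b : ℕ → ℂ} {g : ℂ → ℂ} (hb : PS b g) {ε : ℂ} (hε : ‖ε‖ = 1) (η : ℂ) (s : ℝ)
    (α : ℝ) {q : ENNReal} (hq : 1 ≤ q) :
    eLpNorm (rotSum ε η g s) q (bMeas α) ≤ (2 + ‖η‖ₑ) * eLpNorm g q (bMeas α) := by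
  have h1 := hb.rot (norm_exp_I s)
  have h2 := (hb.rot (norm_exp_I (-s))).const_mul ε
  have h3 := hb.const_mul η
  have hε' : ‖ε‖ₑ = 1 := by rw [← ofReal_norm, hε, ENNReal.ofReal_one]
  calc eLpNorm (rotSum ε η g s) q (bMeas α)
      ≤ eLpNorm (fun z => g (cexp (s * I) * z)) q (bMeas α)
        + eLpNorm (fun z => ε * g (cexp ((-s : ℝ) * I) * z)) q (bMeas α)
        + eLpNorm (fun z => η * g z) q (bMeas α) :=
        (eLpNorm_add_le ((h1.add h2).aesm' α) (h3.aesm' α) hq).trans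
          (add_le_add (eLpNorm_add_le (h1.aesm' α) (h2.aesm' α) hq) le_rfl)
    _ = (2 + ‖η‖ₑ) * eLpNorm g q (bMeas α) := by
        have e2 := eLpNorm_const_smul ε (fun z => g (cexp ((-s : ℝ) * I) * z)) q (bMeas α)
        have e3 := eLpNorm_const_smul η g q (bMeas α)
        rw [hε', one_mul] at e2
        rw [hb.eLpNorm_rot (norm_exp_I s)]
        erw [e2, e3]
        rw [hb.eLpNorm_rot (norm_exp_I (-s))]
        ring

lemma eker_eq_rotMul (r j : ℕ) (c t : ℝ) : eker r (c * j) t = rotMul ((-1) ^ r) 0 j (c * t) := by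
  unfold eker rotMul
  rw [← Complex.exp_nat_mul, ← Complex.exp_nat_mul, add_zero]
  push_cast
  congr 2
  · ring_nf
  · ring_nf

lemma integral_abs_Hf (r : ℕ) : ∫ t in Ioi (0:ℝ), |Hf r t| = Real.pi / 4 * Cc r := by
  unfold Cc
  have := Real.pi_ne_zero
  field_simp

/-- The multiplier `Ak r (c j)` has norm at most `(π/2) C_r`, since `∫ |H_r| = (π/4) C_r` and two
rotations are involved. -/
lemma Ak_bound {p : ℝ} (hp : 1 < p) (α : ℝ) {b : ℕ → ℂ} {g F : ℂ → ℂ} (hb : PS b g) (r : ℕ) (c : ℝ)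
    (hF : PS (fun j => b j * Ak r (c * j)) F) :
    eLpNorm F (ENNReal.ofReal p) (bMeas α)
      ≤ ENNReal.ofReal (Real.pi / 2 * Cc r) * eLpNorm g (ENNReal.ofReal p) (bMeas α) := by
  -- Only the values of `g` on the disc matter, and cutting `g` off there makes it measurable on `ℂ`.
  set γ := unitDisc.indicator g with hγ
  have hbγ : PS b γ := hb.indicator
  have hn : eLpNorm g (ENNReal.ofReal p) (bMeas α) = eLpNorm γ (ENNReal.ofReal p) (bMeas α) :=
    eLpNorm_bMeas_congr fun z hz => by simp [hγ, hz]
  have hq : 1 ≤ ENNReal.ofReal p := by simpa using hp.le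
  have hcoef : (fun j : ℕ => b j * Ak r (c * j)) = fun j => b j *
      ∫ t in Ioi (0:ℝ), (Hf r t : ℂ) * (fun t => rotMul ((-1) ^ r) 0 j (c * t)) t := by
    ext j
    simp only [Ak]
    congr 2
    ext t
    rw [eker_eq_rotMul, mul_comm]
  rw [hcoef] at hF
  have key := conv_bound hp α (ν := volume.restrict (Ioi (0:ℝ))) (Hf_integrable r).ofReal hbγ
    (e := fun j t => rotMul ((-1) ^ r) 0 j (c * t))
    (fun j => (measurable_rotMul _ _ j).comp (measurable_const_mul c))
    (fun j t => norm_rotMul_le _ _ j _)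
    (G := fun t => rotSum ((-1) ^ r) 0 γ (c * t)) (fun t => hbγ.rotSum _ _ _)
    (measurable_rotSum hb.measurable_indicator _ _ c) hF (W := fun _ => 1) measurable_const
    (by simp) (by simp) (B := 2 * eLpNorm γ (ENNReal.ofReal p) (bMeas α))
    (ae_of_all _ fun t => by
      simpa using eLpNorm_rotSum_le hbγ (ε := (-1) ^ r) (by simp) 0 (c * t) α hq)
  refine key.trans (le_of_eq ?_)
  rw [hn, ← mul_assoc]
  congr 1
  have : ∫⁻ t in Ioi (0:ℝ), ‖((Hf r t : ℝ) : ℂ)‖ₑ * 1 = ENNReal.ofReal (Real.pi / 4 * Cc r) := by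
    rw [← integral_abs_Hf]
    have h := ofReal_integral_norm_eq_lintegral_enorm (Hf_integrable r)
    simp only [Real.norm_eq_abs] at h
    rw [h]
    refine lintegral_congr fun t => ?_
    rw [mul_one, ← ofReal_norm, ← ofReal_norm, Complex.norm_real]
  erw [this]
  rw [← ENNReal.ofReal_ofNat, ← ENNReal.ofReal_mul' (by norm_num)]
  congr 1
  ring

/-! ### Averages of second differences -/

lemma norm_multiplier_le {ν : Measure ℝ} {k : ℝ → ℂ} (hk : Integrable k ν) {e : ℝ → ℂ} {C : ℝ}
    (hC : ∀ t, ‖e t‖ ≤ C) : ‖∫ t, k t * e t ∂ν‖ ≤ ∫ t, ‖k t‖ * C ∂ν := by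
  refine norm_integral_le_of_norm_le (hk.norm.mul_const C) (ae_of_all _ fun t => ?_)
  rw [norm_mul]
  gcongr
  exact hC t

lemma exists_Ak_mul {b : ℕ → ℂ} {g : ℂ → ℂ} (hb : PS b g) (r : ℕ) (c : ℝ) :
    ∃ F, PS (fun j => b j * Ak r (c * j)) F := by
  refine hb.exists_mul (C := ∫ t in Ioi (0:ℝ), ‖((Hf r t : ℝ) : ℂ)‖ * 2) fun j => ?_
  have := norm_multiplier_le (Hf_integrable r).ofReal (e := eker r (c * j))
    (fun t => norm_eker_le r _ t)
  refine le_trans (le_of_eq ?_) this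
  rw [Ak]
  congr 2
  ext t
  exact mul_comm _ _

/-- The kernel `-(δ - u)/δ²`; averaging second differences of step `u` against it on `(0, δ]`
reproduces a function up to a term that is a second `θ`-integral of its second difference of step
`δ`. -/
def sker (δ u : ℝ) : ℝ := -((δ - u) / δ ^ 2)

/-- The multiplier of the second-difference average with kernel `sker δ`. -/
def smul2 (δ : ℝ) (j : ℕ) : ℂ := ∫ u in Ioc 0 δ, (sker δ u : ℂ) * rotMul 1 (-2) j u

lemma sker_integrable (δ : ℝ) : IntegrableOn (fun u => (sker δ u : ℂ)) (Ioc 0 δ) := by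
  have : Continuous fun u => (sker δ u : ℂ) := by unfold sker; fun_prop
  exact (this.integrableOn_Icc).mono_set Ioc_subset_Icc_self

lemma rotMul_one_neg_two (j : ℕ) (u : ℝ) :
    rotMul 1 (-2) j u = ((2 * Real.cos (j * u) - 2 : ℝ) : ℂ) := by
  unfold rotMul
  rw [← Complex.exp_nat_mul, ← Complex.exp_nat_mul]
  push_cast
  rw [Complex.two_cos]
  ring_nf

lemma sker_integral {δ : ℝ} (hδ : 0 < δ) (j : ℕ) :
    (δ ^ 2 * j ^ 2) * ∫ u in (0:ℝ)..δ, sker δ u * (2 * Real.cos (j * u) - 2)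
      = 2 * Real.cos (j * δ) - 2 + δ ^ 2 * j ^ 2 := by
  -- The antiderivative comes from integrating `δ - u` by parts twice.
  have hd : ∀ u ∈ uIcc (0:ℝ) δ, HasDerivAt (fun u : ℝ => (δ - u) * (2 * j * Real.sin (j * u)
      - 2 * j ^ 2 * u) - 2 * Real.cos (j * u) - j ^ 2 * u ^ 2)
      (j ^ 2 * ((δ - u) * (2 * Real.cos (j * u) - 2))) u := by
    intro u _
    have hid := hasDerivAt_id' u
    have hj := hid.const_mul (j:ℝ)
    have h1 := (hid.const_sub δ).mul ((hj.sin.const_mul (2 * j:ℝ)).sub (hid.const_mul (2 * j ^ 2:ℝ)))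
    have h2 := (h1.sub (hj.cos.const_mul 2)).sub ((hid.pow 2).const_mul (j ^ 2:ℝ))
    refine h2.congr_deriv ?_
    simp
    ring
  have hc : Continuous fun u : ℝ => (j:ℝ) ^ 2 * ((δ - u) * (2 * Real.cos (j * u) - 2)) := by
    fun_prop
  have h := intervalIntegral.integral_eq_sub_of_hasDerivAt hd (hc.intervalIntegrable _ _)
  rw [← intervalIntegral.integral_const_mul]
  have e : ∀ u : ℝ, δ ^ 2 * j ^ 2 * (sker δ u * (2 * Real.cos (j * u) - 2))
      = -((j:ℝ) ^ 2 * ((δ - u) * (2 * Real.cos (j * u) - 2))) := by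
    intro u
    unfold sker
    field_simp
  simp only [e]
  rw [intervalIntegral.integral_neg, h]
  simp
  ring

lemma smul2_spec {δ : ℝ} (hδ : 0 < δ) (j : ℕ) :
    (δ ^ 2 * j ^ 2 : ℂ) * (1 - smul2 δ j) = -rotMul 1 (-2) j δ := by
  have e : smul2 δ j
      = ((∫ u in (0:ℝ)..δ, sker δ u * (2 * Real.cos (j * u) - 2) : ℝ) : ℂ) := by
    unfold smul2
    rw [intervalIntegral.integral_of_le hδ.le, ← integral_complex_ofReal]
    simp only [rotMul_one_neg_two, ← Complex.ofReal_mul]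
  rw [e, rotMul_one_neg_two, mul_sub, mul_one]
  have := sker_integral hδ j
  rw [← Complex.ofReal_natCast, ← Complex.ofReal_pow, ← Complex.ofReal_pow, ← Complex.ofReal_mul,
    ← Complex.ofReal_mul, this]
  push_cast
  ring

lemma exists_smul2_mul {b : ℕ → ℂ} {g : ℂ → ℂ} (hb : PS b g) (δ : ℝ) :
    ∃ F, PS (fun j => b j * smul2 δ j) F :=
  hb.exists_mul fun j => norm_multiplier_le (sker_integrable δ) (e := rotMul 1 (-2) j)
    (fun t => norm_rotMul_le 1 (-2) j t)

lemma rotSum_congr {g γ : ℂ → ℂ} (h : ∀ z ∈ unitDisc, g z = γ z) (ε η : ℂ) (s : ℝ) :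
    ∀ z ∈ unitDisc, rotSum ε η g s z = rotSum ε η γ s z := by
  intro z hz
  have hr : ∀ x : ℝ, cexp (x * I) * z ∈ unitDisc := fun x => by
    rw [mem_unitDisc, norm_mul, norm_exp_I, one_mul]
    exact mem_unitDisc.1 hz
  simp only [rotSum, h _ hz, h _ (hr _)]

/-- The mass of the kernel against the Zygmund modulus: `∫_0^δ u (δ - u)/δ² du = δ/6`. -/
lemma sker_mass {δ : ℝ} (hδ : 0 < δ) :
    ∫⁻ u in Ioc 0 δ, ‖(sker δ u : ℂ)‖ₑ * ENNReal.ofReal u = ENNReal.ofReal (δ / 6) := by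
  have hi : ∫ u in (0:ℝ)..δ, (δ - u) / δ ^ 2 * u = δ / 6 := by
    have hd : ∀ u ∈ uIcc (0:ℝ) δ, HasDerivAt (fun u : ℝ => (δ * u ^ 2 / 2 - u ^ 3 / 3) / δ ^ 2)
        ((δ - u) / δ ^ 2 * u) u := by
      intro u _
      have hid := hasDerivAt_id' u
      have h2 := ((((hid.pow 2).const_mul δ).div_const 2).sub ((hid.pow 3).div_const 3)).div_const
        (δ ^ 2)
      refine h2.congr_deriv ?_
      simp
      ring
    have hc : Continuous fun u : ℝ => (δ - u) / δ ^ 2 * u := by fun_prop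
    rw [intervalIntegral.integral_eq_sub_of_hasDerivAt hd (hc.intervalIntegrable _ _)]
    field_simp
    ring
  rw [← hi, intervalIntegral.integral_of_le hδ.le]
  have hc : Continuous fun u : ℝ => (δ - u) / δ ^ 2 * u := by fun_prop
  rw [ofReal_integral_eq_lintegral_ofReal (hc.integrableOn_Icc.mono_set Ioc_subset_Icc_self)]
  · refine setLIntegral_congr_fun measurableSet_Ioc fun u hu => ?_
    have h1 : 0 ≤ (δ - u) / δ ^ 2 := div_nonneg (by linarith [hu.2]) (by positivity)
    rw [ENNReal.ofReal_mul h1, ← ofReal_norm, Complex.norm_real, sker, norm_neg,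
      Real.norm_of_nonneg h1]
  · filter_upwards [ae_restrict_mem measurableSet_Ioc] with u hu
    exact mul_nonneg (div_nonneg (by linarith [hu.2]) (by positivity)) hu.1.le

/-- Under a Zygmund condition on `g` with constant `M`, the function obtained from `g` by the
multiplier `smul2 δ` has norm at most `M δ / 6`. -/
lemma smul2_bound {p : ℝ} (hp : 1 < p) (α : ℝ) {b : ℕ → ℂ} {g F : ℂ → ℂ} (hb : PS b g) {δ M : ℝ}
    (hδ : 0 < δ)
    (hM : ∀ u : ℝ, eLpNorm (rotSum 1 (-2) g u) (ENNReal.ofReal p) (bMeas α)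
      ≤ ENNReal.ofReal (M * |u|))
    (hF : PS (fun j => b j * smul2 δ j) F) :
    eLpNorm F (ENNReal.ofReal p) (bMeas α) ≤ ENNReal.ofReal (M * δ / 6) := by
  set γ := unitDisc.indicator g with hγ
  have hbγ : PS b γ := hb.indicator
  have key := conv_bound hp α (ν := volume.restrict (Ioc 0 δ)) (sker_integrable δ) hbγ
    (e := fun j t => rotMul 1 (-2) j t)
    (fun j => measurable_rotMul _ _ j)
    (fun j t => norm_rotMul_le _ _ j _)
    (G := fun t => rotSum 1 (-2) γ t) (fun t => hbγ.rotSum _ _ _)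
    (by simpa using measurable_rotSum hb.measurable_indicator 1 (-2) 1) hF
    (W := fun u => ENNReal.ofReal u) ENNReal.measurable_ofReal
    (by
      filter_upwards [ae_restrict_mem measurableSet_Ioc] with u hu
      simpa using hu.1) (by simp) (B := ENNReal.ofReal M)
    (by
      filter_upwards [ae_restrict_mem measurableSet_Ioc] with u hu
      rw [eLpNorm_bMeas_congr (rotSum_congr (γ := g) (fun z hz => by simp [hγ, hz]) 1 (-2) u),
        ← ENNReal.ofReal_mul hu.1.le, mul_comm u M]
      simpa [abs_of_pos hu.1] using hM u)
  rw [sker_mass hδ, ← ENNReal.ofReal_mul (by positivity)] at key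
  refine key.trans (le_of_eq ?_)
  congr 1
  ring

/-! ### Approximation by polynomials -/

lemma eLpNorm_const_mul' (c : ℂ) (F : ℂ → ℂ) (q : ENNReal) (μ : Measure ℂ) :
    eLpNorm (fun z => c * F z) q μ = ‖c‖ₑ * eLpNorm F q μ :=
  eLpNorm_const_smul c F q μ

/-- The multiplier `(1 - trap (j/m)) (i j)^{-r}` has norm at most `C_r m^{-r}`. To avoid dividing by
`j = 0`, the quotient of the coefficients of `g` by `(i j)^r` is passed as `v`. -/
lemma exists_highpass {p : ℝ} (hp : 1 < p) (α : ℝ) {b v : ℕ → ℂ} {g : ℂ → ℂ} (hb : PS b g)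
    {r : ℕ} (hr : 1 ≤ r) {m : ℝ} (hm : 0 < m) (hv : ∀ j, b j = (I * j) ^ r * v j) :
    ∃ F, PS (fun j => v j * (1 - trap (m⁻¹ * j))) F ∧
      eLpNorm F (ENNReal.ofReal p) (bMeas α)
        ≤ ENNReal.ofReal (Cc r / m ^ r) * eLpNorm g (ENNReal.ofReal p) (bMeas α) := by
  obtain ⟨F, hF⟩ := exists_Ak_mul hb r m⁻¹
  have hm' : (m : ℂ) ≠ 0 := by exact_mod_cast hm.ne'
  have hpi : (Real.pi : ℂ) ≠ 0 := by exact_mod_cast Real.pi_ne_zero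
  refine ⟨fun z => (-(2 / Real.pi) / m ^ r : ℝ) * F z, ?_, ?_⟩
  · convert hF.const_mul ((-(2 / Real.pi) / m ^ r : ℝ) : ℂ) using 1
    ext j
    have h := Ak_mul r hr (m⁻¹ * j)
    have h2 : b j * Ak r (m⁻¹ * j) = v j * m ^ r * (-(Real.pi / 2) * (1 - trap (m⁻¹ * j))) := by
      rw [hv, ← h]
      push_cast
      simp only [mul_pow, inv_pow]
      field_simp
    rw [h2]
    push_cast
    field_simp
  · rw [eLpNorm_const_mul']
    refine (mul_le_mul_right (Ak_bound hp α hb r _ hF) _).trans (le_of_eq ?_)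
    have hn : ‖((-(2 / Real.pi) / m ^ r : ℝ) : ℂ)‖ₑ = ENNReal.ofReal (2 / Real.pi / m ^ r) := by
      rw [← ofReal_norm, Complex.norm_real, Real.norm_eq_abs, neg_div, abs_neg,
        abs_of_pos (by positivity)]
    rw [hn, ← mul_assoc, ← ENNReal.ofReal_mul (by positivity)]
    congr 2
    have := Real.pi_ne_zero
    field_simp

/-- The summand `a_j s_j`, weighted by a factor `u_j` that is `1` for `j ≥ n`; the factor is `1` when
`K = 0` and `1 - trap (2 j / n)` otherwise. -/
lemma exists_low {p : ℝ} (hp : 1 < p) (α : ℝ) {a : ℕ → ℂ} {g : ℂ → ℂ} {K n : ℕ}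
    (hg : PS (fun j => a j * (I * j) ^ K) g) (hn : 1 ≤ n) {M : ℝ} (hM0 : 0 ≤ M)
    (hM : ∀ u : ℝ, eLpNorm (rotSum 1 (-2) g u) (ENNReal.ofReal p) (bMeas α)
      ≤ ENNReal.ofReal (M * |u|)) {δ : ℝ} (hδ : 0 < δ) :
    ∃ (F : ℂ → ℂ) (u : ℕ → ℂ), (∀ j, n ≤ j → u j = 1) ∧
      PS (fun j => a j * smul2 δ j * u j) F ∧ eLpNorm F (ENNReal.ofReal p) (bMeas α)
        ≤ ENNReal.ofReal (Cc K / ((n : ℝ) / 2) ^ K * (M * δ / 6)) := by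
  have hn0 : (0 : ℝ) < n := by exact_mod_cast hn
  obtain ⟨G, hG⟩ := exists_smul2_mul hg δ
  have hGb := smul2_bound hp α hg hδ hM hG
  rcases Nat.eq_zero_or_pos K with rfl | hK
  · refine ⟨G, fun _ => 1, fun _ _ => rfl, by simpa using hG, hGb.trans ?_⟩
    refine ENNReal.ofReal_le_ofReal ?_
    rw [pow_zero, div_one]
    exact le_mul_of_one_le_left (by positivity) one_le_Cc_zero
  · obtain ⟨F, hF, hFb⟩ := exists_highpass hp α hG (v := fun j => a j * smul2 δ j) hK
      (m := (n : ℝ) / 2) (by positivity) (fun j => by ring)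
    refine ⟨F, _, fun j hj => ?_, hF, hFb.trans ?_⟩
    · have : (n : ℝ) ≤ j := by exact_mod_cast hj
      rw [trap_zero]
      · simp
      · rw [inv_div, div_mul_eq_mul_div, le_div_iff₀ hn0]
        linarith
    · have := Cc_nonneg K
      rw [ENNReal.ofReal_mul (by positivity)]
      gcongr

/-- The summand `a_j (1 - s_j)`, weighted by `u_j = 1 - trap (2 j / n)`: by `smul2_spec` it is a
`(K + 2)`-fold `θ`-integral of the second difference of `g`, divided by `δ²`. -/
lemma exists_high {p : ℝ} (hp : 1 < p) (α : ℝ) {a : ℕ → ℂ} {g : ℂ → ℂ} {K n : ℕ}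
    (hg : PS (fun j => a j * (I * j) ^ K) g) (hn : 1 ≤ n) {M : ℝ}
    (hM : ∀ u : ℝ, eLpNorm (rotSum 1 (-2) g u) (ENNReal.ofReal p) (bMeas α)
      ≤ ENNReal.ofReal (M * |u|)) {δ : ℝ} (hδ : 0 < δ) :
    ∃ (F : ℂ → ℂ) (u : ℕ → ℂ), (∀ j, n ≤ j → u j = 1) ∧
      PS (fun j => a j * (1 - smul2 δ j) * u j) F ∧ eLpNorm F (ENNReal.ofReal p) (bMeas α)
        ≤ ENNReal.ofReal (Cc (K + 2) / ((n : ℝ) / 2) ^ (K + 2) * (M / δ)) := by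
  have hn0 : (0 : ℝ) < n := by exact_mod_cast hn
  have hδ' : (δ : ℂ) ≠ 0 := by exact_mod_cast hδ.ne'
  have hG := (hg.rotSum 1 (-2) δ).const_mul (((δ ^ 2)⁻¹ : ℝ) : ℂ)
  obtain ⟨F, hF, hFb⟩ := exists_highpass hp α hG (v := fun j => a j * (1 - smul2 δ j))
    (r := K + 2) (by omega) (m := (n : ℝ) / 2) (by positivity) (fun j => by
      have h := smul2_spec hδ j
      have h2 : rotMul 1 (-2) j δ = -((δ ^ 2 * j ^ 2 : ℂ) * (1 - smul2 δ j)) := by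
        rw [h, neg_neg]
      rw [h2, pow_add, mul_pow I _ 2, I_sq]
      push_cast
      field_simp)
  refine ⟨F, _, fun j hj => ?_, hF, hFb.trans ?_⟩
  · have : (n : ℝ) ≤ j := by exact_mod_cast hj
    rw [trap_zero]
    · simp
    · rw [inv_div, div_mul_eq_mul_div, le_div_iff₀ hn0]
      linarith
  · have := Cc_nonneg (K + 2)
    rw [eLpNorm_const_mul', ENNReal.ofReal_mul (by positivity)]
    gcongr
    refine (mul_le_mul_right (hM δ) _).trans (le_of_eq ?_)
    rw [← ofReal_norm, Complex.norm_real, Real.norm_of_nonneg (by positivity),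
      ← ENNReal.ofReal_mul (by positivity), abs_of_pos hδ]
    congr 1
    field_simp

lemma PS.polynomial (c : ℕ → ℂ) (n : ℕ) (hc : ∀ j, n ≤ j → c j = 0) :
    PS c fun z => (∑ j ∈ Finset.range n, Polynomial.C (c j) * Polynomial.X ^ j).eval z := by
  intro z _
  have h := hasSum_sum_of_ne_finset_zero (L := SummationFilter.unconditional ℕ)
    (f := fun j => c j * z ^ j) (s := Finset.range n)
    (fun j hj => by rw [hc j (by simpa using hj), zero_mul])
  simpa [Polynomial.eval_finsetSum] using h

lemma bound_arith {K n : ℕ} (hn : 1 ≤ n) {M : ℝ} (hM0 : 0 ≤ M) :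
    Cc K / ((n : ℝ) / 2) ^ K * (M * (4 * Real.pi / n) / 6)
      + Cc (K + 2) / ((n : ℝ) / 2) ^ (K + 2) * (M / (4 * Real.pi / n))
      ≤ Btil K * M * (n : ℝ) ^ (-(K : ℝ) - 1) := by
  have hn0 : (0 : ℝ) < n := by exact_mod_cast hn
  have hpi := Real.pi_pos
  have e : (n : ℝ) ^ (-(K : ℝ) - 1) = ((n : ℝ) ^ (K + 1))⁻¹ := by
    rw [← Real.rpow_natCast, ← Real.rpow_neg hn0.le]
    congr 1
    push_cast
    ring
  have hc := Cc_nonneg K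
  have h1 : Cc K / ((n : ℝ) / 2) ^ K * (M * (4 * Real.pi / n) / 6)
      = 2 / 3 * (2 ^ K * (Real.pi * Cc K) * M * ((n : ℝ) ^ (K + 1))⁻¹) := by
    rw [div_pow, pow_succ]
    field_simp
    ring
  have h2 : Cc (K + 2) / ((n : ℝ) / 2) ^ (K + 2) * (M / (4 * Real.pi / n))
      = 2 ^ K * (Cc (K + 2) / Real.pi) * M * ((n : ℝ) ^ (K + 1))⁻¹ := by
    rw [div_pow, pow_add _ K 2, pow_add _ K 2, pow_succ]
    field_simp
    ring
  have h3 : 0 ≤ 2 ^ K * (Real.pi * Cc K) * M * ((n : ℝ) ^ (K + 1))⁻¹ := by positivity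
  rw [h1, h2, e, Btil]
  linarith

/-- The approximation statement in terms of `eLpNorm`. -/
lemma exists_poly {p : ℝ} (hp : 1 < p) (α : ℝ) {a : ℕ → ℂ} {f g : ℂ → ℂ} {K n : ℕ}
    (hf : PS a f) (hg : PS (fun j => a j * (I * j) ^ K) g) (hn : 1 ≤ n) {M : ℝ} (hM0 : 0 ≤ M)
    (hM : ∀ u : ℝ, eLpNorm (rotSum 1 (-2) g u) (ENNReal.ofReal p) (bMeas α)
      ≤ ENNReal.ofReal (M * |u|)) :
    ∃ P : Polynomial ℂ, P.natDegree ≤ n ∧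
      AEStronglyMeasurable (fun z => f z - P.eval z) (volume.restrict unitDisc) ∧
      eLpNorm (fun z => f z - P.eval z) (ENNReal.ofReal p) (bMeas α)
        ≤ ENNReal.ofReal (Btil K * M * (n : ℝ) ^ (-(K : ℝ) - 1)) := by
  have hn0 : (0 : ℝ) < n := by exact_mod_cast hn
  have hδ : 0 < 4 * Real.pi / n := by positivity
  obtain ⟨F₁, u₁, hu₁, hF₁, hb₁⟩ := exists_low hp α hg hn hM0 hM hδ
  obtain ⟨F₂, u₂, hu₂, hF₂, hb₂⟩ := exists_high hp α hg hn hM hδ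
  have hF := hF₁.add hF₂
  have hc : ∀ j, n ≤ j → a j - (a j * smul2 (4 * Real.pi / n) j * u₁ j
      + a j * (1 - smul2 (4 * Real.pi / n) j) * u₂ j) = 0 := by
    intro j hj
    rw [hu₁ j hj, hu₂ j hj]
    ring
  have hP := PS.polynomial _ n hc
  set P : Polynomial ℂ := ∑ j ∈ Finset.range n, Polynomial.C (a j - (a j * smul2 (4 * Real.pi / n) j
    * u₁ j + a j * (1 - smul2 (4 * Real.pi / n) j) * u₂ j)) * Polynomial.X ^ j
  have hdiff : ∀ z ∈ unitDisc, f z - P.eval z = F₁ z + F₂ z := by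
    intro z hz
    have hs := hP.add hF
    simp only [sub_add_cancel] at hs
    have := hf.eq_on hs hz
    rw [this]
    ring
  refine ⟨P, ?_, ?_, ?_⟩
  · refine Polynomial.natDegree_sum_le_of_forall_le _ _ fun j hj => ?_
    exact (Polynomial.natDegree_C_mul_X_pow_le _ _).trans (Finset.mem_range.1 hj).le
  · refine hF.aesm.congr ?_
    filter_upwards [ae_restrict_mem measurableSet_unitDisc] with z hz
    exact (hdiff z hz).symm
  · rw [eLpNorm_bMeas_congr hdiff]
    have hc1 := Cc_nonneg K
    have hc2 := Cc_nonneg (K + 2)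
    calc eLpNorm (fun z => F₁ z + F₂ z) (ENNReal.ofReal p) (bMeas α)
        ≤ _ := eLpNorm_add_le (hF₁.aesm' α) (hF₂.aesm' α) (by simpa using hp.le)
      _ ≤ _ := add_le_add hb₁ hb₂
      _ = _ := (ENNReal.ofReal_add (by positivity) (by positivity)).symm
      _ ≤ _ := ENNReal.ofReal_le_ofReal (bound_arith hn hM0)

/-- If `D_θ^K f` satisfies the Zygmund condition
`‖(D_θ^K f)(e^{it}·) + (D_θ^K f)(e^{-it}·) - 2(D_θ^K f)(·)‖_{p,α} ≤ M|t|`, then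
`E_n^{p,α}(f) ≤ B̃_K M n^{-K-1}` for every `n ≥ 1`. -/
theorem polyErr_le_of_deriv_zygmund
    (p α M : ℝ) (hp : 1 < p) (hα : -1 < α) (K : ℕ)
    (f : ℂ → ℂ) (hf : MemAp p α f) (hDf : MemAp p α (Dth^[K] f))
    (hM : ∀ t : ℝ, bNorm p α (fun z =>
        Dth^[K] f (Complex.exp (t * Complex.I) * z)
          + Dth^[K] f (Complex.exp (-t * Complex.I) * z)
          - 2 * Dth^[K] f z) ≤ M * |t|)
    (n : ℕ) (hn : 1 ≤ n) :
    polyErr p α n f ≤ Btil K * M * (n : ℝ) ^ (-(K : ℝ) - 1) := by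
  have hp0 : 0 < p := by linarith
  obtain ⟨a, ha⟩ := PS.of_differentiableOn hf.1
  have hg := ha.dth_iterate K
  set g := Dth^[K] f
  have hrot : ∀ t : ℝ, (fun z => g (Complex.exp (t * Complex.I) * z)
      + g (Complex.exp (-t * Complex.I) * z) - 2 * g z) = rotSum 1 (-2) g t := by
    intro t
    ext z
    simp only [rotSum]
    push_cast
    ring
  -- Membership of `g` in `A^p_α` keeps the real-valued `bNorm` from being a junk `0` at infinity.
  have hgt := hDf.eLpNorm_ne_top hp0
  have hM0 : 0 ≤ M := by
    have h0 : 0 ≤ bNorm p α (rotSum 1 (-2) g 1) := by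
      rw [bNorm_eq hp0 hα (hg.rotSum 1 (-2) 1).aesm]
      exact ENNReal.toReal_nonneg
    have h1 := hM 1
    rw [hrot 1, abs_one, mul_one] at h1
    exact h0.trans h1
  have hM' : ∀ u : ℝ, eLpNorm (rotSum 1 (-2) g u) (ENNReal.ofReal p) (bMeas α)
      ≤ ENNReal.ofReal (M * |u|) := by
    intro u
    have h1 := hM u
    rw [hrot u, bNorm_eq hp0 hα (hg.rotSum 1 (-2) u).aesm] at h1
    have hfin : eLpNorm (rotSum 1 (-2) g u) (ENNReal.ofReal p) (bMeas α) ≠ ⊤ :=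
      ne_top_of_le_ne_top (ENNReal.mul_ne_top (by simp) hgt)
        (eLpNorm_rotSum_le hg (ε := 1) (by simp) (-2) u α (by simpa using hp.le))
    exact (ENNReal.le_ofReal_iff_toReal_le hfin (by positivity)).2 h1
  obtain ⟨P, hdeg, hmeas, hle⟩ := exists_poly hp α ha hg hn hM0 hM'
  have hR : 0 ≤ Btil K * M * (n : ℝ) ^ (-(K : ℝ) - 1) := by
    have h1 := Cc_nonneg K
    have h2 := Cc_nonneg (K + 2)
    unfold Btil
    positivity
  unfold polyErr
  refine le_trans (csInf_le (a := bNorm p α fun z => f z - P.eval z) ?_ ⟨P, hdeg, rfl⟩) ?_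
  · refine ⟨0, ?_⟩
    rintro e ⟨Q, -, rfl⟩
    refine Real.rpow_nonneg (setIntegral_nonneg measurableSet_unitDisc fun z hz => ?_) _
    exact mul_nonneg (by positivity) (wt_nonneg hα hz)
  · rw [bNorm_eq hp0 hα hmeas]
    exact ENNReal.toReal_le_of_le_ofReal hR hle
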